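/- arXiv:1002.3338 — 2 statements merged into one kernel-verified Lean document; each statement's English description precedes it below -/
import Mathlib

section
/- If D ⊆ ℝℙⁿ is a compact convex set, then its elliptic tube D^e ⊆ ℂℙⁿ is ℂ-convex. -/
open scoped ComplexConjugate

noncomputable section

abbrev RV (n : ℕ) : Type := Fin (n + 1) → ℝ
abbrev CV (n : ℕ) : Type := Fin (n + 1) → ℂ
abbrev RP (n : ℕ) : Type := Projectivization ℝ (RV n)
abbrev CP (n : ℕ) : Type := Projectivization ℂ (CV n)

/-- The quotient topology on a projectivization. -/
instance projTopology {K V : Type*} [DivisionRing K] [AddCommGroup V] [Module K V]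
    [TopologicalSpace V] : TopologicalSpace (Projectivization K V) :=
  inferInstanceAs (TopologicalSpace (Quotient (projectivizationSetoid K V)))

/-- Complexification of a real vector. -/
def cplx {n : ℕ} (v : RV n) : CV n := fun i => (v i : ℂ)

/-- The closed (possibly degenerate) projective segment spanned by two lifts. -/
def realSeg {n : ℕ} (v₀ v₁ : RV n) : Set (RP n) :=
  {x | ∃ c₀ c₁ : ℝ, 0 ≤ c₀ * c₁ ∧ ∃ h : c₀ • v₀ + c₁ • v₁ ≠ 0,
    x = Projectivization.mk ℝ (c₀ • v₀ + c₁ • v₁) h}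

/-- The elliptic tube over the closed segment determined by the lifts `v₀ v₁`. -/
def segTube {n : ℕ} (v₀ v₁ : RV n) : Set (CP n) :=
  {z | ∃ c₀ c₁ : ℂ, 0 ≤ (c₀ * conj c₁).re ∧ ∃ h : c₀ • cplx v₀ + c₁ • cplx v₁ ≠ 0,
    z = Projectivization.mk ℂ (c₀ • cplx v₀ + c₁ • cplx v₁) h}

/-- The elliptic tube over a subset `D` of real projective space: the union of the tubes
over all closed segments contained in `D`. -/
def eTube {n : ℕ} (D : Set (RP n)) : Set (CP n) :=
  ⋃ (v₀ : RV n) (v₁ : RV n) (_ : v₀ ≠ 0) (_ : v₁ ≠ 0) (_ : realSeg v₀ v₁ ⊆ D),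
    segTube v₀ v₁

/-- Real projective lines. -/
def isLineR {n : ℕ} (L : Set (RP n)) : Prop :=
  ∃ W : Submodule ℝ (RV n), Module.finrank ℝ W = 2 ∧ L = {x | x.rep ∈ W}

/-- Convexity in real projective space: the set contains no projective line and its
intersection with every projective line is connected. -/
def convexR {n : ℕ} (D : Set (RP n)) : Prop :=
  (∀ L, isLineR L → ¬ L ⊆ D) ∧ ∀ L, isLineR L → IsPreconnected (D ∩ L)

/-- Complex projective lines in `ℂℙⁿ`. -/
def isLineC {n : ℕ} (L : Set (CP n)) : Prop :=
  ∃ W : Submodule ℂ (CV n), Module.finrank ℂ W = 2 ∧ L = {z | z.rep ∈ W}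

/-- ℂ-convexity: the set contains no complex projective line, and its intersection with
every complex projective line is connected and simply connected. -/
def cConvex {n : ℕ} (E : Set (CP n)) : Prop :=
  (∀ L, isLineC L → ¬ L ⊆ E) ∧
    ∀ L, isLineC L → IsPreconnected (E ∩ L) ∧
      ((E ∩ L).Nonempty → SimplyConnectedSpace ↥(E ∩ L))

open Set Filter Topology

/-- A subset of a topological real vector space is contractible if it is a retract of the space. -/
theorem contractibleSpace_of_retraction {F : Type*} [AddCommGroup F] [Module ℝ F]
    [TopologicalSpace F] [ContinuousAdd F] [ContinuousSMul ℝ F] {X : Set F}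
    (r : F → F) (hr : Continuous r) (hrX : ∀ a, r a ∈ X) (hrid : ∀ a ∈ X, r a = a) :
    ContractibleSpace X := by
  rw [contractible_iff_id_nullhomotopic]
  have := RealTopologicalVectorSpace.contractibleSpace (E := F)
  let ρ : C(F, X) := ⟨fun a => ⟨r a, hrX a⟩, by fun_prop⟩
  let ι : C(X, F) := ⟨Subtype.val, continuous_subtype_val⟩
  have h := ((id_nullhomotopic F).comp_right ρ).comp_left ι
  have hid : (ρ.comp ((ContinuousMap.id F).comp ι)) = ContinuousMap.id X := by
    ext x
    exact hrid x x.2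
  simpa [← hid] using h

/-- The image of a compact convex set under the perspective map `b ↦ (ℓ b)⁻¹ • b` of a complex
functional `ℓ` without zeros on the set is contractible: it is a retract of the whole space. -/
theorem contractibleSpace_perspective_image {F : Type*} [NormedAddCommGroup F] [NormedSpace ℂ F]
    [NormedSpace ℝ F] [IsScalarTower ℝ ℂ F] {B : Set F} (hBc : IsCompact B) (hB : Convex ℝ B)
    (hne : B.Nonempty) (ℓ : F →L[ℂ] ℂ) (hℓ : ∀ b ∈ B, ℓ b ≠ 0) :
    ContractibleSpace ((fun b => (ℓ b)⁻¹ • b) '' B) := by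
  classical
  set X := (fun b => (ℓ b)⁻¹ • b) '' B
  have hcont : ContinuousOn (fun b => (ℓ b)⁻¹ • b) B :=
    (ℓ.continuous.continuousOn.inv₀ hℓ).smul continuousOn_id
  have hXc : IsCompact X := hBc.image_of_continuousOn hcont
  have hXne : X.Nonempty := hne.image _
  obtain ⟨M, hM⟩ := (hBc.image ℓ.continuous).isBounded.exists_norm_le
  have hM' : ∀ b ∈ B, ‖ℓ b‖ ≤ M := fun b hb => hM _ (mem_image_of_mem _ hb)
  obtain ⟨N, hN⟩ := (hBc.image_of_continuousOn
    (ℓ.continuous.continuousOn.inv₀ hℓ)).isBounded.exists_norm_le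
  have hN' : ∀ b ∈ B, ‖(ℓ b)⁻¹‖ ≤ N := fun b hb => hN _ (mem_image_of_mem _ hb)
  have hM0 : 0 < M := by
    obtain ⟨b, hb⟩ := hne
    exact (norm_pos_iff.2 (hℓ b hb)).trans_le (hM' b hb)
  have hN0 : 0 < N := by
    obtain ⟨b, hb⟩ := hne
    exact (norm_pos_iff.2 (inv_ne_zero (hℓ b hb))).trans_le (hN' b hb)
  have hpos : ∀ a ∉ X, 0 < Metric.infDist a X := fun a ha =>
    (hXc.isClosed.notMem_iff_infDist_pos hXne).1 ha
  obtain ⟨g, hg⟩ := exists_continuous_forall_mem_convex_of_local_const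
    (X := (Xᶜ : Set F)) (E := F)
    (t := fun a => {b | b ∈ B ∧ ‖b - ℓ b • (a : F)‖ < 2 * M * Metric.infDist (a : F) X})
    (by
      intro a x hx y hy s t hs ht hst
      refine ⟨hB hx.1 hy.1 hs ht hst, ?_⟩
      have h := (convex_ball (0 : F) (2 * M * Metric.infDist (a : F) X))
        (mem_ball_zero_iff.2 hx.2) (mem_ball_zero_iff.2 hy.2) hs ht hst
      rw [mem_ball_zero_iff] at h
      have e1 : ∀ (s : ℝ) (x : F), ℓ (s • x) = s • ℓ x := fun s x => by
        rw [← algebraMap_smul ℂ s x, map_smul, algebraMap_smul]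
      have e2 : s • x + t • y - ℓ (s • x + t • y) • (a : F) =
          s • (x - ℓ x • (a : F)) + t • (y - ℓ y • (a : F)) := by
        rw [map_add, e1, e1, add_smul, smul_assoc, smul_assoc, smul_sub, smul_sub]
        abel
      rwa [e2])
    (by
      rintro ⟨a, ha⟩
      obtain ⟨x, ⟨b, hb, rfl⟩, hx⟩ := hXc.exists_infDist_eq_dist hXne a
      refine ⟨b, ?_⟩
      have hlt : ‖b - ℓ b • a‖ < 2 * M * Metric.infDist a X := by
        have h1 : b - ℓ b • a = ℓ b • ((ℓ b)⁻¹ • b - a) := by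
          rw [smul_sub, smul_inv_smul₀ (hℓ b hb)]
        have h2 := hpos a ha
        rw [h1, norm_smul, ← dist_eq_norm, dist_comm, ← hx]
        have := mul_le_mul_of_nonneg_right (hM' b hb) h2.le
        nlinarith [mul_pos hM0 h2]
      have hc : Continuous fun a : (Xᶜ : Set F) => ‖b - ℓ b • (a : F)‖ := by fun_prop
      have hd : Continuous fun a : (Xᶜ : Set F) => 2 * M * Metric.infDist (a : F) X :=
        continuous_const.mul ((Metric.continuous_infDist_pt X).comp continuous_subtype_val)
      filter_upwards [hc.continuousAt.eventually_lt hd.continuousAt hlt] with y hy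
      exact ⟨hb, hy⟩)
  let r : F → F := fun a => if h : a ∈ X then a else (ℓ (g ⟨a, h⟩))⁻¹ • g ⟨a, h⟩
  have hr1 : ∀ a ∈ X, r a = a := fun a ha => dif_pos ha
  have hr2 : ∀ a (ha : a ∉ X), r a = (ℓ (g ⟨a, ha⟩))⁻¹ • g ⟨a, ha⟩ := fun a ha => dif_neg ha
  have hdist : ∀ a, dist (r a) a ≤ N * (2 * M) * Metric.infDist a X := by
    intro a
    by_cases ha : a ∈ X
    · rw [hr1 a ha, dist_self]
      have := Metric.infDist_nonneg (x := a) (s := X)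
      positivity
    · have hb := hg ⟨a, ha⟩
      set b := g ⟨a, ha⟩ with hbdef
      have h1 : (ℓ b)⁻¹ • b - a = (ℓ b)⁻¹ • (b - ℓ b • a) := by
        rw [smul_sub, inv_smul_smul₀ (hℓ b hb.1)]
      rw [hr2 a ha, dist_eq_norm, ← hbdef, h1, norm_smul, mul_assoc]
      exact mul_le_mul (hN' b hb.1) hb.2.le (norm_nonneg _) hN0.le
  refine contractibleSpace_of_retraction r ?_ ?_ hr1
  · rw [continuous_iff_continuousAt]
    intro a
    by_cases ha : a ∈ X
    · rw [ContinuousAt, hr1 a ha, tendsto_iff_dist_tendsto_zero]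
      have hlim : Tendsto (fun x => N * (2 * M) * Metric.infDist x X + dist x a) (𝓝 a) (𝓝 0) := by
        have : Continuous fun x => N * (2 * M) * Metric.infDist x X + dist x a :=
          (continuous_const.mul (Metric.continuous_infDist_pt X)).add
            (continuous_id.dist continuous_const)
        simpa [Metric.infDist_zero_of_mem ha] using this.tendsto a
      refine squeeze_zero (fun _ => dist_nonneg) (fun x => ?_) hlim
      exact (dist_triangle _ x _).trans (by gcongr; exact hdist x)
    · have hopen : IsOpen (Xᶜ : Set F) := hXc.isClosed.isOpen_compl
      refine ContinuousOn.continuousAt (s := Xᶜ) ?_ (hopen.mem_nhds ha)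
      rw [continuousOn_iff_continuous_domRestrict]
      have : (Xᶜ : Set F).domRestrict r = fun x => (ℓ (g x))⁻¹ • g x := by
        ext1 x
        exact hr2 x x.2
      rw [this]
      exact ((ℓ.continuous.comp g.continuous).inv₀ fun x => hℓ _ (hg x).1).smul g.continuous
  · intro a
    by_cases ha : a ∈ X
    · rwa [hr1 a ha]
    · rw [hr2 a ha]
      exact mem_image_of_mem _ (hg ⟨a, ha⟩).1

section SymmetricCone

variable {V : Type*} [NormedAddCommGroup V] [NormedSpace ℝ V]

/-- A nonzero vector and a vector that is not proportional to it are linearly independent. -/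
theorem linearIndependent_pair_or_exists_smul {u : V} (hu : u ≠ 0) (v : V) :
    LinearIndependent ℝ ![u, v] ∨ ∃ t : ℝ, v = t • u := by
  rw [LinearIndependent.pair_iff' hu]
  by_cases h : ∃ t : ℝ, v = t • u
  · exact Or.inr h
  · push Not at h
    exact Or.inl fun a ha => h a ha.symm

/-- A closed convex cone without lines in a finite-dimensional space admits a functional which is
bounded below by a positive multiple of the norm. -/
theorem exists_pos_functional_of_salient [FiniteDimensional ℝ V] {K : Set V} (hK : IsClosed K)
    (h0 : (0 : V) ∈ K) (hadd : ∀ v ∈ K, ∀ w ∈ K, ∀ s t : ℝ, 0 ≤ s → 0 ≤ t → s • v + t • w ∈ K)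
    (hneg : ∀ v ∈ K, -v ∈ K → v = 0) :
    ∃ ℓ : V →L[ℝ] ℝ, ∃ c : ℝ, 0 < c ∧ ∀ v ∈ K, c * ‖v‖ ≤ ℓ v := by
  have hconv : Convex ℝ K := fun v hv w hw s t hs ht _ => hadd v hv w hw s t hs ht
  have hsm : ∀ v ∈ K, ∀ s : ℝ, 0 ≤ s → s • v ∈ K := fun v hv s hs => by
    simpa using hadd v hv v hv s 0 hs le_rfl
  have hScomp : IsCompact (K ∩ Metric.sphere 0 1) := (isCompact_sphere 0 1).inter_left hK
  obtain ⟨ℓ, hℓK, hℓS⟩ : ∃ ℓ : V →L[ℝ] ℝ, (∀ v ∈ K, 0 ≤ ℓ v) ∧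
      ∀ v ∈ K ∩ Metric.sphere 0 1, 0 < ℓ v := by
    refine hScomp.induction_on (p := fun s => ∃ ℓ : V →L[ℝ] ℝ, (∀ v ∈ K, 0 ≤ ℓ v) ∧
      ∀ v ∈ s, v ∈ K → 0 < ℓ v) ⟨0, by simp, by simp⟩ ?_ ?_ ?_ |>.imp
      fun ℓ h => ⟨h.1, fun v hv => h.2 v hv hv.1⟩
    · rintro s t hst ⟨ℓ, h1, h2⟩
      exact ⟨ℓ, h1, fun v hv => h2 v (hst hv)⟩
    · rintro s t ⟨ℓ, h1, h2⟩ ⟨ℓ', h1', h2'⟩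
      refine ⟨ℓ + ℓ', fun v hv => add_nonneg (h1 v hv) (h1' v hv), ?_⟩
      rintro v (hv | hv) hvK
      · exact add_pos_of_pos_of_nonneg (h2 v hv hvK) (h1' v hvK)
      · exact add_pos_of_nonneg_of_pos (h1 v hvK) (h2' v hv hvK)
    · rintro v ⟨hv, hv1⟩
      have hv0 : v ≠ 0 := by
        rintro rfl
        simp at hv1
      obtain ⟨f, u, hfu, hf⟩ := geometric_hahn_banach_point_closed hconv hK
        (fun h => hv0 (hneg v hv h) : -v ∉ K)
      have hu : u < 0 := by simpa using hf 0 h0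
      have hfv : 0 < f v := by
        rw [map_neg] at hfu
        linarith
      refine ⟨{w | 0 < f w}, ?_, f, fun w hw => ?_, fun w hw _ => hw⟩
      · exact mem_nhdsWithin_of_mem_nhds
          ((isOpen_lt continuous_const f.continuous).mem_nhds hfv)
      · by_contra hlt
        push Not at hlt
        have := hf _ (hsm w hw (u / f w) (div_nonneg_of_nonpos hu.le hlt.le))
        rw [map_smul, smul_eq_mul, div_mul_cancel₀ _ hlt.ne] at this
        exact lt_irrefl _ this
  obtain ⟨c, hc, hcS⟩ : ∃ c : ℝ, 0 < c ∧ ∀ v ∈ K ∩ Metric.sphere 0 1, c ≤ ℓ v := by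
    rcases (K ∩ Metric.sphere (0 : V) 1).eq_empty_or_nonempty with he | hne
    · exact ⟨1, one_pos, by simp [he]⟩
    · obtain ⟨x, hx, hmin⟩ := hScomp.exists_isMinOn hne ℓ.continuous.continuousOn
      exact ⟨ℓ x, hℓS x hx, fun v hv => hmin hv⟩
  refine ⟨ℓ, c, hc, fun v hv => ?_⟩
  rcases eq_or_ne v 0 with rfl | hv0
  · simp
  · have hn : 0 < ‖v‖ := norm_pos_iff.2 hv0
    have := hcS (‖v‖⁻¹ • v) ⟨hsm v hv _ (by positivity), by simp [norm_smul, hn.ne']⟩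
    rw [map_smul, smul_eq_mul, inv_mul_eq_div, le_div_iff₀ hn] at this
    exact this

/-- The half of a symmetric cone `C` visible from `u`: the vectors `v` such that `C` contains the
cone spanned by `u` and `v`, apart from those on the ray opposite to `u`. -/
def visibleHalf (C : Set V) (u : V) : Set V :=
  {v | (∀ s t : ℝ, 0 ≤ s → 0 ≤ t → s • u + t • v ∈ C) ∧ ∀ t : ℝ, 0 ≤ t → v ≠ -(t • u)}

theorem ne_zero_of_mem_visibleHalf {C : Set V} {u v : V} (hv : v ∈ visibleHalf C u) : v ≠ 0 := by
  simpa using hv.2 0 le_rfl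

theorem smul_mem_visibleHalf {C : Set V} {u v : V} (hv : v ∈ visibleHalf C u) {r : ℝ}
    (hr : 0 < r) : r • v ∈ visibleHalf C u := by
  refine ⟨fun s t hs ht => ?_, fun t ht h => hv.2 (r⁻¹ * t) (by positivity) ?_⟩
  · rw [smul_smul]
    exact hv.1 s (t * r) hs (by positivity)
  · rw [mul_smul, ← smul_neg, ← h, inv_smul_smul₀ hr.ne']

theorem mem_visibleHalf_or_neg_mem {C : Set V} (hsmul : ∀ c : ℝ, ∀ v ∈ C, c • v ∈ C)
    (h2 : ∀ u ∈ C, ∀ v ∈ C, LinearIndependent ℝ ![u, v] →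
      (∀ s t : ℝ, 0 ≤ s → 0 ≤ t → s • u + t • v ∈ C) ∨
      (∀ s t : ℝ, 0 ≤ s → 0 ≤ t → s • u - t • v ∈ C))
    {u v : V} (hu : u ∈ C) (hu0 : u ≠ 0) (hv : v ∈ C) (hv0 : v ≠ 0) :
    v ∈ visibleHalf C u ∨ -v ∈ visibleHalf C u := by
  have hpos : ∀ r : ℝ, 0 < r → r • u ∈ visibleHalf C u := by
    refine fun r hr => ⟨fun s t _ _ => ?_, fun t ht h => ?_⟩
    · rw [smul_smul, ← add_smul]
      exact hsmul _ _ hu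
    · rw [← neg_smul] at h
      have := smul_left_injective ℝ hu0 h
      linarith
  rcases linearIndependent_pair_or_exists_smul hu0 v with hLI | ⟨t, rfl⟩
  · have hne : ∀ t : ℝ, v ≠ t • u := fun t h => (LinearIndependent.pair_iff' hu0).1 hLI t h.symm
    rcases h2 u hu v hv hLI with h | h
    · exact Or.inl ⟨h, fun t _ ht => hne (-t) (by rw [ht, neg_smul])⟩
    · refine Or.inr ⟨fun s t hs ht => ?_, fun t _ ht => hne t (neg_injective ht)⟩
      rw [smul_neg, ← sub_eq_add_neg]
      exact h s t hs ht
  · rcases lt_trichotomy t 0 with ht | rfl | ht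
    · right
      rw [← neg_smul]
      exact hpos _ (neg_pos.2 ht)
    · simp at hv0
    · exact Or.inl (hpos t ht)

theorem neg_notMem_visibleHalf {C : Set V} (hsmul : ∀ c : ℝ, ∀ v ∈ C, c • v ∈ C)
    (h1 : ∀ u v : V, LinearIndependent ℝ ![u, v] → ∃ a b : ℝ, a • u + b • v ∉ C)
    {u v : V} (hu0 : u ≠ 0) (hv : v ∈ visibleHalf C u) : -v ∉ visibleHalf C u := by
  intro hv'
  rcases linearIndependent_pair_or_exists_smul hu0 v with hLI | ⟨t, rfl⟩
  · obtain ⟨a, b, hab⟩ := h1 u v hLI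
    have key : ∀ a b : ℝ, 0 ≤ a → a • u + b • v ∈ C := by
      intro a b ha
      rcases le_total 0 b with hb | hb
      · exact hv.1 a b ha hb
      · simpa using hv'.1 a (-b) ha (by linarith)
    rcases le_total 0 a with ha | ha
    · exact hab (key a b ha)
    · refine hab ?_
      have := hsmul (-1) _ (key (-a) (-b) (by linarith))
      simpa [add_comm] using this
  · rcases le_total 0 t with ht | ht
    · exact hv'.2 t ht rfl
    · exact hv.2 (-t) (by linarith) (by simp)

/-- The visible half keeps away from the ray opposite to its base point. -/
theorem exists_bound_visibleHalf [FiniteDimensional ℝ V] {C : Set V} (hC : IsClosed C)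
    (hsmul : ∀ c : ℝ, ∀ v ∈ C, c • v ∈ C)
    (h1 : ∀ u v : V, LinearIndependent ℝ ![u, v] → ∃ a b : ℝ, a • u + b • v ∉ C)
    {u : V} (hu : u ∈ C) (g : V →L[ℝ] ℝ) (hg : g u = 1) :
    ∃ R : ℝ, ∀ v ∈ visibleHalf C u, -R * ‖v - g v • u‖ ≤ g v := by
  have hu0 : u ≠ 0 := by
    rintro rfl
    simp at hg
  have hS : IsCompact ({y : V | g y = 0} ∩ Metric.sphere 0 1) :=
    (isCompact_sphere 0 1).inter_left (isClosed_eq g.continuous continuous_const)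
  obtain ⟨R, hR⟩ : ∃ R : ℝ, ∀ y ∈ {y : V | g y = 0} ∩ Metric.sphere 0 1,
      ∃ α : ℝ, -R ≤ α ∧ α • u + y ∉ C := by
    refine hS.induction_on (p := fun s => ∃ R : ℝ, ∀ y ∈ s, ∃ α : ℝ, -R ≤ α ∧ α • u + y ∉ C)
      ⟨0, by simp⟩ ?_ ?_ ?_
    · rintro s t hst ⟨R, h⟩
      exact ⟨R, fun y hy => h y (hst hy)⟩
    · rintro s t ⟨R, h⟩ ⟨R', h'⟩
      refine ⟨max R R', ?_⟩
      rintro y (hy | hy)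
      · obtain ⟨α, hα, hα'⟩ := h y hy
        exact ⟨α, by linarith [le_max_left R R'], hα'⟩
      · obtain ⟨α, hα, hα'⟩ := h' y hy
        exact ⟨α, by linarith [le_max_right R R'], hα'⟩
    · rintro y ⟨hgy, hy⟩
      have hy0 : y ≠ 0 := by
        rintro rfl
        simp at hy
      have hLI : LinearIndependent ℝ ![u, y] := by
        refine (LinearIndependent.pair_iff' hu0).2 fun a ha => hy0 ?_
        have : g y = a := by rw [← ha, map_smul, hg, smul_eq_mul, mul_one]
        rw [← ha, ← this, show g y = 0 from hgy, zero_smul]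
      obtain ⟨a, b, hab⟩ := h1 u y hLI
      have hb : b ≠ 0 := by
        rintro rfl
        exact hab (by simpa using hsmul a u hu)
      have hmem : (a / b) • u + y ∉ C := fun h => hab (by
        have := hsmul b _ h
        rwa [smul_add, smul_smul, mul_div_cancel₀ _ hb] at this)
      refine ⟨{y | (a / b) • u + y ∉ C}, mem_nhdsWithin_of_mem_nhds ?_, -(a / b), fun y hy =>
        ⟨a / b, by simp, hy⟩⟩
      exact (hC.isOpen_compl.preimage (continuous_const.add continuous_id)).mem_nhds hmem
  refine ⟨R, fun v hv => ?_⟩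
  by_contra hlt
  push Not at hlt
  set e := v - g v • u with he
  have hve : v = e + g v • u := by rw [he, sub_add_cancel]
  rcases eq_or_ne e 0 with he0 | he0
  · rw [he0, norm_zero, mul_zero] at hlt
    refine hv.2 (-g v) (by linarith) ?_
    rw [neg_smul, neg_neg]
    simpa [he0] using hve
  · have hn : 0 < ‖e‖ := norm_pos_iff.2 he0
    obtain ⟨α, hα, hαC⟩ := hR (‖e‖⁻¹ • e) ⟨by simp [he, hg], by simp [norm_smul, hn.ne']⟩
    refine hαC ?_
    have h3 : 0 ≤ α * ‖e‖ - g v := by nlinarith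
    have h4 := hsmul ‖e‖⁻¹ _ (hv.1 _ 1 h3 zero_le_one)
    have h5 : (α * ‖e‖ - g v) • u + (1 : ℝ) • v = (α * ‖e‖) • u + e := by
      rw [one_smul, sub_smul]
      nth_rewrite 2 [hve]
      abel
    rwa [h5, smul_add, smul_smul, mul_comm α, inv_mul_cancel_left₀ hn.ne'] at h4

theorem isClosed_insert_zero_visibleHalf [FiniteDimensional ℝ V] {C : Set V} (hC : IsClosed C)
    (hsmul : ∀ c : ℝ, ∀ v ∈ C, c • v ∈ C)
    (h1 : ∀ u v : V, LinearIndependent ℝ ![u, v] → ∃ a b : ℝ, a • u + b • v ∉ C)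
    {u : V} (hu : u ∈ C) (hu0 : u ≠ 0) : IsClosed (insert 0 (visibleHalf C u)) := by
  obtain ⟨g, hg⟩ := SeparatingDual.exists_eq_one (R := ℝ) hu0
  obtain ⟨R, hR⟩ := exists_bound_visibleHalf hC hsmul h1 hu g hg
  have heq : insert 0 (visibleHalf C u) =
      {v | ∀ s t : ℝ, 0 ≤ s → 0 ≤ t → s • u + t • v ∈ C} ∩ {v | -R * ‖v - g v • u‖ ≤ g v} := by
    ext v
    constructor
    · rintro (rfl | hv)
      · exact ⟨fun s t _ _ => by simpa using hsmul s u hu, by simp⟩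
      · exact ⟨hv.1, hR v hv⟩
    · rintro ⟨hv, hv'⟩
      by_cases h0 : v = 0
      · exact Or.inl h0
      · refine Or.inr ⟨hv, ?_⟩
        rintro t ht rfl
        have : t = 0 := by
          simp [hg] at hv'
          linarith
        simp [this] at h0
  rw [heq]
  refine IsClosed.inter ?_ (isClosed_le (by fun_prop) g.continuous)
  simp only [ofPred_forall]
  exact isClosed_iInter fun s => isClosed_iInter fun t => isClosed_iInter fun _ =>
    isClosed_iInter fun _ => hC.preimage (by fun_prop)

/-- A closed symmetric cone which contains no plane and, with any two vectors `u, v`, one of the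
two convex cones spanned by `u, ±v`, meets some hyperplane only in the origin. -/
theorem exists_functional_of_symmetric_cone [FiniteDimensional ℝ V] {C : Set V} (hC : IsClosed C)
    (hsmul : ∀ c : ℝ, ∀ v ∈ C, c • v ∈ C)
    (h1 : ∀ u v : V, LinearIndependent ℝ ![u, v] → ∃ a b : ℝ, a • u + b • v ∉ C)
    (h2 : ∀ u ∈ C, ∀ v ∈ C, LinearIndependent ℝ ![u, v] →
      (∀ s t : ℝ, 0 ≤ s → 0 ≤ t → s • u + t • v ∈ C) ∨
      (∀ s t : ℝ, 0 ≤ s → 0 ≤ t → s • u - t • v ∈ C)) :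
    ∃ ℓ : V →L[ℝ] ℝ, ∃ c : ℝ, 0 < c ∧ ∀ v ∈ C, c * ‖v‖ ≤ |ℓ v| := by
  by_cases hex : ∃ u ∈ C, u ≠ 0
  swap
  · push Not at hex
    exact ⟨0, 1, one_pos, fun v hv => by simp [hex v hv]⟩
  obtain ⟨u, hu, hu0⟩ := hex
  set P := visibleHalf C u
  have hcover : ∀ v ∈ C, v ≠ 0 → v ∈ P ∨ -v ∈ P := fun v hv hv0 =>
    mem_visibleHalf_or_neg_mem hsmul h2 hu hu0 hv hv0
  have hnot : ∀ v ∈ P, -v ∉ P := fun v hv => neg_notMem_visibleHalf hsmul h1 hu0 hv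
  have hP0 : ∀ v ∈ P, v ≠ 0 := fun v hv => ne_zero_of_mem_visibleHalf hv
  have hPC : ∀ v ∈ P, v ∈ C := fun v hv => by simpa using hv.1 0 1 le_rfl zero_le_one
  have hK : IsClosed (insert 0 P) := isClosed_insert_zero_visibleHalf hC hsmul h1 hu hu0
  have hconn : ∀ S : Set V, IsPreconnected S → S ⊆ C → (0 : V) ∉ S → ∀ v ∈ S, v ∈ P → S ⊆ P := by
    intro S hS hSC h0S v hvS hvP w hw
    have hw0 : ∀ w ∈ S, w ≠ 0 := fun w hw h => h0S (h ▸ hw)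
    rcases isPreconnected_iff_subset_of_disjoint_closed.1 hS (insert 0 P) (-(insert 0 P)) hK
      hK.neg
      (fun w hw => (hcover w (hSC hw) (hw0 w hw)).imp Or.inr fun h => Or.inr h)
      (by
        refine eq_empty_of_forall_notMem ?_
        rintro w ⟨hw, h | h, h' | h'⟩
        · exact hw0 w hw h
        · exact hw0 w hw h
        · exact hw0 w hw (neg_eq_zero.1 h')
        · exact hnot w h h') with h | h
    · exact (h hw).resolve_left (hw0 w hw)
    · rcases h hvS with h' | h'
      · exact absurd (neg_eq_zero.1 h') (hP0 v hvP)
      · exact absurd h' (hnot v hvP)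
  have hseg : ∀ v w : V, v ∈ P → LinearIndependent ℝ ![v, w] →
      (∀ s t : ℝ, 0 ≤ s → 0 ≤ t → s • v + t • w ∈ C) → segment ℝ v w ⊆ P := by
    intro v w hv hLI h
    refine hconn _ (convex_segment v w).isPreconnected ?_ ?_ v (left_mem_segment ℝ v w) hv
    · rintro _ ⟨s, t, hs, ht, _, rfl⟩
      exact h s t hs ht
    · rintro ⟨s, t, _, _, hst, h0⟩
      have := LinearIndependent.pair_iff.1 hLI s t h0
      linarith
  have hconv : Convex ℝ P := by
    rw [convex_iff_segment_subset]
    intro v hv w hw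
    rcases linearIndependent_pair_or_exists_smul (hP0 v hv) w with hLI | ⟨t, rfl⟩
    · rcases h2 v (hPC v hv) w (hPC w hw) hLI with h | h
      · exact hseg v w hv hLI h
      · have hLI' : LinearIndependent ℝ ![v, -w] := by
          rw [LinearIndependent.pair_iff] at hLI ⊢
          intro s t hst
          have := hLI s (-t) (by simpa using hst)
          simpa using this
        exact absurd (hseg v (-w) hv hLI' (fun s t hs ht => by
          simpa [sub_eq_add_neg] using h s t hs ht) (right_mem_segment ℝ v (-w))) (hnot w hw)
    · have ht : 0 < t := by
        rcases lt_trichotomy t 0 with ht | rfl | ht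
        · refine absurd ?_ (hnot _ hw)
          rw [← neg_smul]
          exact smul_mem_visibleHalf hv (neg_pos.2 ht)
        · exact absurd (zero_smul ℝ v) (hP0 _ hw)
        · exact ht
      rintro _ ⟨a, b, ha, hb, hab, rfl⟩
      rw [smul_smul, ← add_smul]
      refine smul_mem_visibleHalf hv ?_
      rcases ha.eq_or_lt with rfl | ha
      · rw [show b = 1 by linarith]
        linarith
      · positivity
  obtain ⟨ℓ, c, hc, hℓ⟩ := exists_pos_functional_of_salient hK (mem_insert 0 P)
    (by
      have hsm : ∀ v ∈ insert 0 P, ∀ s : ℝ, 0 ≤ s → s • v ∈ insert 0 P := by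
        rintro v (rfl | hv) s hs
        · simp
        · rcases hs.eq_or_lt with rfl | hs
          · simp
          · exact Or.inr (smul_mem_visibleHalf hv hs)
      have hadd : ∀ v ∈ insert 0 P, ∀ w ∈ insert 0 P, v + w ∈ insert 0 P := by
        rintro v (rfl | hv) w hw
        · simpa using hw
        · rcases hw with rfl | hw
          · simpa using Or.inr hv
          · right
            have := smul_mem_visibleHalf (hconv hv hw (a := 1 / 2) (b := 1 / 2)
              (by norm_num) (by norm_num) (by norm_num)) (r := 2) (by norm_num)
            simpa [smul_smul] using this
      exact fun v hv w hw s t hs ht => hadd _ (hsm v hv s hs) _ (hsm w hw t ht))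
    (by
      rintro v (rfl | hv) hv'
      · rfl
      · rcases hv' with h | h
        · exact neg_eq_zero.1 h
        · exact absurd h (hnot v hv))
  refine ⟨ℓ, c, hc, fun v hv => ?_⟩
  rcases eq_or_ne v 0 with rfl | hv0
  · simp
  · rcases hcover v hv hv0 with h | h
    · exact (hℓ v (Or.inr h)).trans (le_abs_self _)
    · have := (hℓ (-v) (Or.inr h)).trans (le_abs_self _)
      simpa using this

end SymmetricCone

section Projective

theorem isQuotientMap_projectivization_mk {K V : Type*} [DivisionRing K] [AddCommGroup V]
    [Module K V] [TopologicalSpace V] :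
    IsQuotientMap (fun v : {v : V // v ≠ 0} => Projectivization.mk K v.1 v.2) :=
  isQuotientMap_quotient_mk'

/-- The representative of a point lies in a linear subspace iff any of its lifts does. -/
theorem mk_rep_mem_iff {K V : Type*} [DivisionRing K] [AddCommGroup V] [Module K V]
    (W : Submodule K V) {v : V} (hv : v ≠ 0) :
    (Projectivization.mk K v hv).rep ∈ W ↔ v ∈ W := by
  obtain ⟨a, ha⟩ := Projectivization.exists_smul_eq_mk_rep K v hv
  rw [← ha]
  exact W.smul_mem_iff_of_isUnit a.isUnit

instance t2Space_RP (n : ℕ) : T2Space (RP n) := by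
  let q : {v : RV n // v ≠ 0} → Fin (n + 1) → Fin (n + 1) → ℝ :=
    fun v i j => v.1 i * v.1 j / ∑ k, v.1 k ^ 2
  have hpos : ∀ v : {v : RV n // v ≠ 0}, 0 < ∑ k, v.1 k ^ 2 := by
    rintro ⟨v, hv⟩
    obtain ⟨k, hk⟩ := Function.ne_iff.1 hv
    have hk' : v k ≠ 0 := hk
    exact Finset.sum_pos' (fun i _ => sq_nonneg _) ⟨k, Finset.mem_univ k, by positivity⟩
  have hq : Continuous q := by
    refine continuous_pi fun i => continuous_pi fun j => Continuous.div ?_ ?_ fun v => (hpos v).ne'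
    · exact ((continuous_apply i).comp continuous_subtype_val).mul
        ((continuous_apply j).comp continuous_subtype_val)
    · exact continuous_finsetSum _ fun k _ =>
        ((continuous_apply k).comp continuous_subtype_val).pow 2
  have hlift : ∀ (a b : {v : RV n // v ≠ 0}) (t : ℝ), a.1 = t • b.1 → q a = q b := by
    rintro ⟨a, ha⟩ ⟨b, hb⟩ t h
    obtain rfl : a = t • b := h
    have ht : t ≠ 0 := by
      rintro rfl
      simp at ha
    ext i j
    have h1 := (hpos ⟨b, hb⟩).ne'
    simp only [q, Pi.smul_apply, smul_eq_mul, mul_pow, ← Finset.mul_sum]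
    field_simp
  let Q : RP n → Fin (n + 1) → Fin (n + 1) → ℝ := Projectivization.lift q hlift
  have hQ : Continuous Q := isQuotientMap_projectivization_mk.continuous_iff.2 hq
  refine T2Space.of_injective_continuous (f := Q) ?_ hQ
  intro x y hxy
  induction x using Projectivization.ind with | h v hv => ?_
  induction y using Projectivization.ind with | h w hw => ?_
  have h : q ⟨v, hv⟩ = q ⟨w, hw⟩ := hxy
  obtain ⟨j, hj⟩ := Function.ne_iff.1 hv
  have hj' : v j ≠ 0 := hj
  have h1 := (hpos ⟨v, hv⟩).ne'
  have h2 := (hpos ⟨w, hw⟩).ne'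
  rw [Projectivization.mk_eq_mk_iff']
  refine ⟨w j / (∑ k, w k ^ 2) * (∑ k, v k ^ 2) / v j, ?_⟩
  ext i
  have hij := congrFun (congrFun h i) j
  simp only [q] at hij h1 h2
  rw [div_eq_div_iff h1 h2] at hij
  simp only [Pi.smul_apply, smul_eq_mul]
  field_simp
  linarith

variable {n : ℕ}

/-- The symmetric cone of all lifts of points of `D`, together with the origin. -/
def coneOver (D : Set (RP n)) : Set (RV n) :=
  {v | ∀ h : v ≠ 0, Projectivization.mk ℝ v h ∈ D}

theorem rep_mem_coneOver {D : Set (RP n)} {x : RP n} : x.rep ∈ coneOver D ↔ x ∈ D := by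
  refine ⟨fun h => ?_, fun h h' => ?_⟩
  · simpa using h x.rep_nonzero
  · simpa using h

theorem smul_mem_coneOver {D : Set (RP n)} (c : ℝ) (v : RV n) (hv : v ∈ coneOver D) :
    c • v ∈ coneOver D := by
  intro h
  have hc : c ≠ 0 := (smul_ne_zero_iff.1 h).1
  have hv0 : v ≠ 0 := (smul_ne_zero_iff.1 h).2
  have : Projectivization.mk ℝ (c • v) h = Projectivization.mk ℝ v hv0 :=
    (Projectivization.mk_eq_mk_iff' ..).2 ⟨c, rfl⟩
  rw [this]
  exact hv hv0

theorem isClosed_coneOver {D : Set (RP n)} (hD : IsClosed D) : IsClosed (coneOver D) := by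
  have hcompl : (coneOver D)ᶜ = Subtype.val ''
      ((fun v : {v : RV n // v ≠ 0} => Projectivization.mk ℝ v.1 v.2) ⁻¹' Dᶜ) := by
    ext v
    simp [coneOver]
  rw [← isOpen_compl_iff, hcompl]
  exact isOpen_ne.isOpenEmbedding_subtypeVal.isOpenMap _
    (hD.isOpen_compl.preimage isQuotientMap_projectivization_mk.continuous)

theorem finrank_span_pair_eq_two {V : Type*} [AddCommGroup V] [Module ℝ V] {u v : V}
    (h : LinearIndependent ℝ ![u, v]) : Module.finrank ℝ (Submodule.span ℝ {u, v}) = 2 := by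
  rw [← Matrix.range_cons_cons_empty u v ![]]
  simpa using finrank_span_eq_card h

theorem exists_notMem_coneOver {D : Set (RP n)} (hD : convexR D) (u v : RV n)
    (h : LinearIndependent ℝ ![u, v]) : ∃ a b : ℝ, a • u + b • v ∉ coneOver D := by
  obtain ⟨x, hx, hxD⟩ := not_subset.1 (hD.1 _ ⟨_, finrank_span_pair_eq_two h, rfl⟩)
  obtain ⟨a, b, hab⟩ := Submodule.mem_span_pair.1 hx
  exact ⟨a, b, fun hC => hxD (rep_mem_coneOver.1 (hab ▸ hC))⟩

theorem isOpen_setOf_pos_rep {q : RV n → ℝ} (hq : Continuous q)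
    (hhom : ∀ (c : ℝ) (v : RV n), q (c • v) = c ^ 2 * q v) : IsOpen {x : RP n | 0 < q x.rep} := by
  rw [← isQuotientMap_projectivization_mk.isOpen_preimage]
  have : (fun v : {v : RV n // v ≠ 0} => Projectivization.mk ℝ v.1 v.2) ⁻¹' {x | 0 < q x.rep} =
      {v | 0 < q v.1} := by
    ext v
    obtain ⟨a, ha⟩ := Projectivization.exists_smul_eq_mk_rep ℝ v.1 v.2
    have ha0 : 0 < (a : ℝ) ^ 2 := by
      have := a.ne_zero
      positivity
    change 0 < q _ ↔ 0 < q _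
    rw [← ha, Units.smul_def, hhom, mul_pos_iff_of_pos_left ha0]
  rw [this]
  exact isOpen_lt continuous_const (hq.comp continuous_subtype_val)

theorem exists_functional_separating_pair {u v : RV n} (h : LinearIndependent ℝ ![u, v]) :
    ∃ g : RV n →L[ℝ] ℝ, g u = 1 ∧ g v = 0 := by
  have hu : u ∉ Submodule.span ℝ {v} := by
    intro hu
    obtain ⟨a, ha⟩ := Submodule.mem_span_singleton.1 hu
    have := (LinearIndependent.pair_iff.1 h (-1) a (by rw [ha]; simp)).1
    norm_num at this
  obtain ⟨f, hf, hfv⟩ := Submodule.exists_dual_map_eq_bot_of_notMem hu inferInstance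
  refine ⟨(f u)⁻¹ • f.toContinuousLinearMap, by simp [hf], ?_⟩
  have : f v ∈ (Submodule.span ℝ {v}).map f :=
    Submodule.mem_map_of_mem (Submodule.mem_span_singleton_self v)
  rw [hfv, Submodule.mem_bot] at this
  simp [this]

theorem cone_subset_or_of_convexR {D : Set (RP n)} (hD : convexR D) (u : RV n)
    (hu : u ∈ coneOver D) (v : RV n) (hv : v ∈ coneOver D) (h : LinearIndependent ℝ ![u, v]) :
    (∀ s t : ℝ, 0 ≤ s → 0 ≤ t → s • u + t • v ∈ coneOver D) ∨
      (∀ s t : ℝ, 0 ≤ s → 0 ≤ t → s • u - t • v ∈ coneOver D) := by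
  by_contra hcon
  push Not at hcon
  obtain ⟨⟨a, b, ha, hb, hp⟩, c, d, hc, hd, hq⟩ := hcon
  have hu' := fun t : ℝ => smul_mem_coneOver t u hu
  have hv' := fun t : ℝ => smul_mem_coneOver t v hv
  have ha : 0 < a := ha.lt_of_ne fun h => hp (by simpa [← h] using hv' b)
  have hb : 0 < b := hb.lt_of_ne fun h => hp (by simpa [← h] using hu' a)
  have hc : 0 < c := hc.lt_of_ne fun h => hq (by simpa [← h] using hv' (-d))
  have hd : 0 < d := hd.lt_of_ne fun h => hq (by simpa [← h] using hu' c)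
  obtain ⟨g, hgu, hgv⟩ := exists_functional_separating_pair h
  obtain ⟨k, hkv, hku⟩ := exists_functional_separating_pair (LinearIndependent.pair_symm_iff.1 h)
  let q : RV n → ℝ := fun w => (b * g w - a * k w) * (d * g w + c * k w)
  have hqc : Continuous q := by fun_prop
  have hqhom : ∀ (t : ℝ) (w : RV n), q (t • w) = t ^ 2 * q w := by
    intro t w
    simp only [q, map_smul, smul_eq_mul]
    ring
  have hu0 : u ≠ 0 := by simpa using h.ne_zero 0
  have hv0 : v ≠ 0 := by simpa using h.ne_zero 1
  have hrep : ∀ w (hw : w ≠ 0), ∃ r : ℝ, 0 < r ∧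
      q (Projectivization.mk ℝ w hw).rep = r * q w := by
    intro w hw
    obtain ⟨t, ht⟩ := Projectivization.exists_smul_eq_mk_rep ℝ w hw
    refine ⟨(t : ℝ) ^ 2, ?_, ?_⟩
    · have := t.ne_zero
      positivity
    · rw [← ht, Units.smul_def, hqhom]
  have hline : isLineR {x : RP n | x.rep ∈ Submodule.span ℝ {u, v}} :=
    ⟨_, finrank_span_pair_eq_two h, rfl⟩
  obtain ⟨x, -, hx, hx'⟩ := hD.2 _ hline {x | 0 < q x.rep} {x | 0 < -q x.rep}
    (isOpen_setOf_pos_rep hqc hqhom)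
    (isOpen_setOf_pos_rep (q := fun w => -q w) hqc.neg fun t w => by rw [hqhom]; ring)
    (by
      rintro x ⟨hxD, hxL⟩
      obtain ⟨α, β, hαβ⟩ := Submodule.mem_span_pair.1 hxL
      rw [← rep_mem_coneOver] at hxD
      have hx0 := x.rep_nonzero
      rw [← hαβ] at hxD hx0
      have hgx : g (α • u + β • v) = α := by simp [hgu, hgv]
      have hkx : k (α • u + β • v) = β := by simp [hku, hkv]
      have hq0 : q x.rep ≠ 0 := by
        rw [← hαβ]
        simp only [q, hgx, hkx]
        refine mul_ne_zero (fun h0 => hp ?_) (fun h0 => hq ?_)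
        · have hβ : β ≠ 0 := by
            rintro rfl
            have : α = 0 := by simpa [hb.ne'] using h0
            simp [this] at hx0
          have := smul_mem_coneOver (b / β) _ hxD
          convert this using 1
          rw [smul_add, smul_smul, smul_smul, div_mul_cancel₀ _ hβ]
          congr 2
          field_simp
          linarith
        · have hβ : β ≠ 0 := by
            rintro rfl
            have : α = 0 := by simpa [hd.ne'] using h0
            simp [this] at hx0
          have := smul_mem_coneOver (-d / β) _ hxD
          convert this using 1
          rw [smul_add, smul_smul, smul_smul, div_mul_cancel₀ _ hβ, neg_smul, sub_eq_add_neg]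
          congr 2
          field_simp
          linarith
      rcases hq0.lt_or_gt with h' | h'
      · exact Or.inr (neg_pos.2 h')
      · exact Or.inl h')
    ⟨Projectivization.mk ℝ u hu0, ⟨hu hu0, (mk_rep_mem_iff _ hu0).2
      (Submodule.subset_span (by simp))⟩, by
        obtain ⟨r, hr, hr'⟩ := hrep u hu0
        change 0 < q _
        rw [hr']
        simp only [q, hgu, hku]
        have : 0 < b * d := mul_pos hb hd
        exact mul_pos hr (by nlinarith)⟩
    ⟨Projectivization.mk ℝ v hv0, ⟨hv hv0, (mk_rep_mem_iff _ hv0).2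
      (Submodule.subset_span (by simp))⟩, by
        obtain ⟨r, hr, hr'⟩ := hrep v hv0
        change 0 < -q _
        rw [hr', ← mul_neg]
        simp only [q, hgv, hkv]
        have : 0 < a * c := mul_pos ha hc
        exact mul_pos hr (by nlinarith)⟩
  have h1 : 0 < q x.rep := hx
  have h2 : 0 < -q x.rep := hx'
  linarith

/-- The part of `coneOver D` on which the functional `ℓ` is nonnegative. -/
def halfCone (D : Set (RP n)) (ℓ : RV n →L[ℝ] ℝ) : Set (RV n) :=
  {v | v ∈ coneOver D ∧ 0 ≤ ℓ v}

theorem smul_add_smul_mem_halfCone {D : Set (RP n)} (hD : convexR D) {ℓ : RV n →L[ℝ] ℝ}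
    (hℓ : ∀ v ∈ coneOver D, ℓ v = 0 → v = 0) {v w : RV n} (hv : v ∈ halfCone D ℓ)
    (hw : w ∈ halfCone D ℓ) {s t : ℝ} (hs : 0 ≤ s) (ht : 0 ≤ t) :
    s • v + t • w ∈ halfCone D ℓ := by
  refine ⟨?_, ?_⟩
  swap
  · have h1 := hv.2
    have h2 := hw.2
    simp only [map_add, map_smul, smul_eq_mul]
    positivity
  rcases eq_or_ne v 0 with rfl | hv0
  · simpa using smul_mem_coneOver t w hw.1
  rcases linearIndependent_pair_or_exists_smul hv0 w with hLI | ⟨r, rfl⟩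
  · rcases cone_subset_or_of_convexR hD v hv.1 w hw.1 hLI with h | h
    · exact h s t hs ht
    · have h0 := hℓ _ (h (ℓ w) (ℓ v) hw.2 hv.2) (by simp [mul_comm])
      rw [sub_eq_add_neg, ← neg_smul] at h0
      have h3 := (LinearIndependent.pair_iff.1 hLI _ _ h0).2
      exact absurd (hℓ v hv.1 (neg_eq_zero.1 h3)) hv0
  · rw [smul_smul, ← add_smul]
    exact smul_mem_coneOver _ _ hv.1

end Projective

section Tube

variable {n : ℕ}

/-- The real part of a complex vector. -/
def reVec (w : CV n) : RV n := fun i => (w i).re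

/-- The imaginary part of a complex vector. -/
def imVec (w : CV n) : RV n := fun i => (w i).im

theorem continuous_reVec : Continuous (reVec (n := n)) :=
  continuous_pi fun i => Complex.continuous_re.comp (continuous_apply i)

theorem continuous_imVec : Continuous (imVec (n := n)) :=
  continuous_pi fun i => Complex.continuous_im.comp (continuous_apply i)

theorem reVec_add (w z : CV n) : reVec (w + z) = reVec w + reVec z := rfl

theorem imVec_add (w z : CV n) : imVec (w + z) = imVec w + imVec z := rfl

theorem reVec_smul (c : ℂ) (w : CV n) : reVec (c • w) = c.re • reVec w - c.im • imVec w := by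
  ext i
  simp [reVec, imVec]

theorem imVec_smul (c : ℂ) (w : CV n) : imVec (c • w) = c.re • imVec w + c.im • reVec w := by
  ext i
  simp [reVec, imVec]

theorem reVec_real_smul (c : ℝ) (w : CV n) : reVec (c • w) = c • reVec w := by
  ext i
  simp [reVec]

theorem imVec_real_smul (c : ℝ) (w : CV n) : imVec (c • w) = c • imVec w := by
  ext i
  simp [imVec]

theorem reVec_cplx (v : RV n) : reVec (cplx v) = v := rfl

theorem imVec_cplx (v : RV n) : imVec (cplx v) = 0 := rfl

theorem cplx_re_add_I_smul_im (w : CV n) :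
    cplx (reVec w) + Complex.I • cplx (imVec w) = w := by
  ext i
  simp only [cplx, reVec, imVec, Pi.add_apply, Pi.smul_apply, smul_eq_mul]
  rw [mul_comm, Complex.re_add_im]

theorem eq_zero_of_reVec_imVec {w : CV n} (hr : reVec w = 0) (hi : imVec w = 0) : w = 0 := by
  ext i
  exact Complex.ext (congrFun hr i) (congrFun hi i)

/-- The complex-linear extension of a real functional. -/
def complexify (ℓ : RV n →L[ℝ] ℝ) : CV n →L[ℂ] ℂ :=
  LinearMap.toContinuousLinearMap
    { toFun := fun w => ⟨ℓ (reVec w), ℓ (imVec w)⟩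
      map_add' := fun w z => by
        apply Complex.ext <;> simp [reVec_add, imVec_add]
      map_smul' := fun c w => by
        apply Complex.ext <;> simp [reVec_smul, imVec_smul] }

theorem complexify_re (ℓ : RV n →L[ℝ] ℝ) (w : CV n) : (complexify ℓ w).re = ℓ (reVec w) := rfl

theorem complexify_im (ℓ : RV n →L[ℝ] ℝ) (w : CV n) : (complexify ℓ w).im = ℓ (imVec w) := rfl

/-- Two complex numbers enclosing an angle of at most `π / 2` can be rotated into the closed first
quadrant. -/
theorem exists_mul_mem_quadrant {a b : ℂ} (h : 0 ≤ (a * conj b).re) :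
    ∃ c : ℂ, c ≠ 0 ∧ 0 ≤ (c * a).re ∧ 0 ≤ (c * a).im ∧ 0 ≤ (c * b).re ∧ 0 ≤ (c * b).im := by
  have hsq : ∀ z : ℂ, 0 ≤ z.re * z.re + z.im * z.im := fun z =>
    add_nonneg (mul_self_nonneg _) (mul_self_nonneg _)
  rcases eq_or_ne a 0 with rfl | ha
  · rcases eq_or_ne b 0 with rfl | hb
    · exact ⟨1, by simp⟩
    · refine ⟨conj b, by simpa using hb, ?_⟩
      simp
      exact ⟨hsq b, by linarith⟩
  · rcases eq_or_ne b 0 with rfl | hb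
    · refine ⟨conj a, by simpa using ha, ?_⟩
      simp
      exact ⟨hsq a, by linarith⟩
    · simp at h
      rcases le_total 0 (a * conj b).im with hi | hi
      · refine ⟨conj b, by simpa using hb, ?_⟩
        simp at hi ⊢
        refine ⟨by linarith, by linarith, hsq b, by linarith⟩
      · refine ⟨conj a, by simpa using ha, ?_⟩
        simp at hi ⊢
        refine ⟨hsq a, by linarith, by linarith, by linarith⟩

theorem mem_eTube_of_mem_halfCone {D : Set (RP n)} (hD : convexR D) {ℓ : RV n →L[ℝ] ℝ}
    (hℓ : ∀ v ∈ coneOver D, ℓ v = 0 → v = 0) {w : CV n} (hw : w ≠ 0)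
    (hr : reVec w ∈ halfCone D ℓ) (hi : imVec w ∈ halfCone D ℓ) :
    Projectivization.mk ℂ w hw ∈ eTube D := by
  have key : ∀ v₀ v₁ : RV n, v₀ ∈ halfCone D ℓ → v₁ ∈ halfCone D ℓ → v₀ ≠ 0 → v₁ ≠ 0 →
      ∀ c₀ c₁ : ℂ, 0 ≤ (c₀ * conj c₁).re → c₀ • cplx v₀ + c₁ • cplx v₁ = w →
      Projectivization.mk ℂ w hw ∈ eTube D := by
    intro v₀ v₁ h₀ h₁ hv₀ hv₁ c₀ c₁ hc hcw
    simp only [eTube, mem_iUnion]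
    subst hcw
    refine ⟨v₀, v₁, hv₀, hv₁, ?_, c₀, c₁, hc, hw, rfl⟩
    rintro _ ⟨a, b, hab, h, rfl⟩
    rcases mul_nonneg_iff.1 hab with ⟨ha, hb⟩ | ⟨ha, hb⟩
    · exact (smul_add_smul_mem_halfCone hD hℓ h₀ h₁ ha hb).1 h
    · have h3 := (smul_add_smul_mem_halfCone hD hℓ h₀ h₁ (neg_nonneg.2 ha) (neg_nonneg.2 hb)).1
      have h4 := smul_mem_coneOver (-1) _ h3
      have h5 : (-1 : ℝ) • (-a • v₀ + -b • v₁) = a • v₀ + b • v₁ := by module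
      rw [h5] at h4
      exact h4 h
  have hdecomp := cplx_re_add_I_smul_im w
  rcases eq_or_ne (reVec w) 0 with hr0 | hr0
  · have hi0 : imVec w ≠ 0 := fun h => hw (eq_zero_of_reVec_imVec hr0 h)
    refine key _ _ hi hi hi0 hi0 0 Complex.I (by simp) ?_
    rw [hr0] at hdecomp
    rw [zero_smul, zero_add]
    nth_rewrite 2 [← hdecomp]
    ext i
    simp [cplx]
  · rcases eq_or_ne (imVec w) 0 with hi0 | hi0
    · refine key _ _ hr hr hr0 hr0 1 0 (by simp) ?_
      rw [hi0] at hdecomp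
      nth_rewrite 3 [← hdecomp]
      ext i
      simp [cplx]
    · exact key _ _ hr hi hr0 hi0 1 Complex.I (by simp) (by rw [one_smul]; exact hdecomp)

theorem exists_halfCone_lift_of_mem_eTube {D : Set (RP n)} (hD : convexR D) {ℓ : RV n →L[ℝ] ℝ}
    (hℓ : ∀ v ∈ coneOver D, ℓ v = 0 → v = 0) {z : CP n} (hz : z ∈ eTube D) :
    ∃ (w : CV n) (hw : w ≠ 0), reVec w ∈ halfCone D ℓ ∧ imVec w ∈ halfCone D ℓ ∧
      z = Projectivization.mk ℂ w hw := by
  simp only [eTube, mem_iUnion] at hz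
  obtain ⟨v₀, v₁, hv₀, hv₁, hseg, c₀, c₁, hc, hne, rfl⟩ := hz
  have hsegC : ∀ s t : ℝ, 0 ≤ s * t → s • v₀ + t • v₁ ∈ coneOver D := fun s t hst h =>
    hseg ⟨s, t, hst, h, rfl⟩
  have h₀ : v₀ ∈ coneOver D := by simpa using hsegC 1 0 (by simp)
  have h₁ : v₁ ∈ coneOver D := by simpa using hsegC 0 1 (by simp)
  have hneg : ∀ v ∈ coneOver D, -v ∈ coneOver D := fun v hv => by
    simpa using smul_mem_coneOver (-1) v hv
  have lift : ∀ v₀ v₁ : RV n, v₀ ∈ halfCone D ℓ → v₁ ∈ halfCone D ℓ → ∀ c₀ c₁ : ℂ,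
      0 ≤ (c₀ * conj c₁).re → ∀ hne : c₀ • cplx v₀ + c₁ • cplx v₁ ≠ 0,
      ∃ (w : CV n) (hw : w ≠ 0), reVec w ∈ halfCone D ℓ ∧ imVec w ∈ halfCone D ℓ ∧
        Projectivization.mk ℂ (c₀ • cplx v₀ + c₁ • cplx v₁) hne = Projectivization.mk ℂ w hw := by
    intro v₀ v₁ h₀ h₁ c₀ c₁ hc hne
    obtain ⟨c, hc0, hr₀, hi₀, hr₁, hi₁⟩ := exists_mul_mem_quadrant hc
    refine ⟨c • (c₀ • cplx v₀ + c₁ • cplx v₁), smul_ne_zero hc0 hne, ?_, ?_, ?_⟩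
    · rw [smul_add, smul_smul, smul_smul, reVec_add, reVec_smul, reVec_smul]
      simp only [reVec_cplx, imVec_cplx, smul_zero, sub_zero]
      exact smul_add_smul_mem_halfCone hD hℓ h₀ h₁ hr₀ hr₁
    · rw [smul_add, smul_smul, smul_smul, imVec_add, imVec_smul, imVec_smul]
      simp only [reVec_cplx, imVec_cplx, smul_zero, zero_add]
      exact smul_add_smul_mem_halfCone hD hℓ h₀ h₁ hi₀ hi₁
    · refine ((Projectivization.mk_eq_mk_iff' ..).2 ⟨c⁻¹, ?_⟩)
      rw [inv_smul_smul₀ hc0]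
  have hcplx_neg : ∀ v : RV n, cplx (-v) = -cplx v := fun v => by
    ext i
    simp [cplx]
  /- If `ℓ` takes opposite signs at `v₀` and `v₁`, then `v₁` is a multiple of `v₀`. -/
  have opp : ℓ v₀ * ℓ v₁ ≤ 0 → ∃ r : ℝ, v₁ = r • v₀ := by
    intro h
    have hz := hℓ _ (hsegC (-ℓ v₁) (ℓ v₀) (by linarith)) (by simp; ring)
    have h0 : ℓ v₀ ≠ 0 := fun h => hv₀ (hℓ _ h₀ h)
    refine ⟨(ℓ v₀)⁻¹ * ℓ v₁, ?_⟩
    have h5 : ℓ v₀ • v₁ = ℓ v₁ • v₀ := by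
      rw [neg_smul, neg_add_eq_zero] at hz
      exact hz.symm
    rw [mul_smul, ← h5, inv_smul_smul₀ h0]
  rcases le_or_gt (ℓ v₀ * ℓ v₁) 0 with h | h
  · obtain ⟨r, rfl⟩ := opp h
    have hsum : c₀ • cplx v₀ + c₁ • cplx (r • v₀) = (c₀ + c₁ * r) • cplx v₀ := by
      ext i
      simp [cplx]
      ring
    have hcv : cplx v₀ ≠ 0 := fun h => hv₀ (by rw [← reVec_cplx v₀, h]; rfl)
    have hsame : ∀ v : RV n, v ∈ halfCone D ℓ → ∀ hv : cplx v ≠ 0,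
        (∃ c : ℂ, c • cplx v = c₀ • cplx v₀ + c₁ • cplx (r • v₀)) →
        ∃ (w : CV n) (hw : w ≠ 0), reVec w ∈ halfCone D ℓ ∧ imVec w ∈ halfCone D ℓ ∧
          Projectivization.mk ℂ _ hne = Projectivization.mk ℂ w hw := fun v hvK hv hc =>
      ⟨cplx v, hv, hvK, ⟨fun h => absurd rfl h, by simp [imVec_cplx]⟩,
        (Projectivization.mk_eq_mk_iff' ..).2 hc⟩
    rcases le_total 0 (ℓ v₀) with h' | h'
    · exact hsame v₀ ⟨h₀, h'⟩ hcv ⟨_, hsum.symm⟩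
    · refine hsame (-v₀) ⟨hneg _ h₀, by simpa using h'⟩ (by simpa [hcplx_neg] using hcv)
        ⟨-(c₀ + c₁ * r), ?_⟩
      rw [hsum, hcplx_neg, smul_neg, neg_smul, neg_neg]
  · rcases pos_and_pos_or_neg_and_neg_of_mul_pos h with ⟨hp₀, hp₁⟩ | ⟨hp₀, hp₁⟩
    · exact lift v₀ v₁ ⟨h₀, hp₀.le⟩ ⟨h₁, hp₁.le⟩ c₀ c₁ hc hne
    · have heq : (-c₀) • cplx (-v₀) + (-c₁) • cplx (-v₁) = c₀ • cplx v₀ + c₁ • cplx v₁ := by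
        simp only [hcplx_neg, smul_neg, neg_smul, neg_neg]
      have := lift (-v₀) (-v₁) ⟨hneg _ h₀, by simpa using hp₀.le⟩
        ⟨hneg _ h₁, by simpa using hp₁.le⟩ (-c₀) (-c₁) (by simpa using hc) (heq ▸ hne)
      simpa only [heq] using this

/-- The normalized lifts in `W` of the points of the elliptic tube. -/
def tubeBase (D : Set (RP n)) (ℓ : RV n →L[ℝ] ℝ) (W : Submodule ℂ (CV n)) : Set (CV n) :=
  {w | w ∈ W ∧ reVec w ∈ halfCone D ℓ ∧ imVec w ∈ halfCone D ℓ ∧ ℓ (reVec w) + ℓ (imVec w) = 1}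

theorem convex_tubeBase {D : Set (RP n)} (hD : convexR D) {ℓ : RV n →L[ℝ] ℝ}
    (hℓ : ∀ v ∈ coneOver D, ℓ v = 0 → v = 0) (W : Submodule ℂ (CV n)) :
    Convex ℝ (tubeBase D ℓ W) := by
  rintro w ⟨hw, hwr, hwi, hw1⟩ z ⟨hz, hzr, hzi, hz1⟩ s t hs ht hst
  refine ⟨W.add_mem (W.smul_of_tower_mem s hw) (W.smul_of_tower_mem t hz), ?_, ?_, ?_⟩
  · rw [reVec_add, reVec_real_smul, reVec_real_smul]
    exact smul_add_smul_mem_halfCone hD hℓ hwr hzr hs ht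
  · rw [imVec_add, imVec_real_smul, imVec_real_smul]
    exact smul_add_smul_mem_halfCone hD hℓ hwi hzi hs ht
  · rw [reVec_add, reVec_real_smul, reVec_real_smul, imVec_add, imVec_real_smul, imVec_real_smul]
    simp only [map_add, map_smul, smul_eq_mul]
    linear_combination s * hw1 + t * hz1 + hst

theorem isCompact_tubeBase {D : Set (RP n)} (hDc : IsClosed D) {ℓ : RV n →L[ℝ] ℝ} {c : ℝ}
    (hc : 0 < c) (hℓ : ∀ v ∈ coneOver D, c * ‖v‖ ≤ |ℓ v|) (W : Submodule ℂ (CV n)) :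
    IsCompact (tubeBase D ℓ W) := by
  have hK : IsClosed (halfCone D ℓ) :=
    (isClosed_coneOver hDc).inter (isClosed_le continuous_const ℓ.continuous)
  refine Metric.isCompact_of_isClosed_isBounded ?_ ?_
  · refine W.closed_of_finiteDimensional.inter ((hK.preimage continuous_reVec).inter
      ((hK.preimage continuous_imVec).inter (isClosed_eq ?_ continuous_const)))
    exact (ℓ.continuous.comp continuous_reVec).add (ℓ.continuous.comp continuous_imVec)
  · refine isBounded_iff_forall_norm_le.2 ⟨1 / c, ?_⟩
    rintro w ⟨-, hr, hi, h1⟩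
    have h2 := hℓ _ hr.1
    have h3 := hℓ _ hi.1
    rw [abs_of_nonneg hr.2] at h2
    rw [abs_of_nonneg hi.2] at h3
    rw [pi_norm_le_iff_of_nonneg (by positivity)]
    intro i
    have h4 : |(w i).re| ≤ ‖reVec w‖ := norm_le_pi_norm (reVec w) i
    have h5 : |(w i).im| ≤ ‖imVec w‖ := norm_le_pi_norm (imVec w) i
    rw [le_div_iff₀ hc]
    have h6 := Complex.norm_le_abs_re_add_abs_im (w i)
    nlinarith

theorem ne_zero_of_complexify_ne_zero {ℓ : RV n →L[ℝ] ℝ} {w : CV n} (h : complexify ℓ w ≠ 0) :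
    w ≠ 0 := by
  rintro rfl
  exact h (map_zero _)

theorem complexify_ne_zero_of_mem_halfCone {D : Set (RP n)} {ℓ : RV n →L[ℝ] ℝ}
    (hℓ : ∀ v ∈ coneOver D, ℓ v = 0 → v = 0) {w : CV n} (hw : w ≠ 0)
    (hr : reVec w ∈ halfCone D ℓ) (hi : imVec w ∈ halfCone D ℓ) : complexify ℓ w ≠ 0 := fun h =>
  hw (eq_zero_of_reVec_imVec (hℓ _ hr.1 (congrArg Complex.re h)) (hℓ _ hi.1 (congrArg Complex.im h)))

theorem complexify_ne_zero_of_mem_tubeBase {D : Set (RP n)} {ℓ : RV n →L[ℝ] ℝ}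
    {W : Submodule ℂ (CV n)} {w : CV n} (hw : w ∈ tubeBase D ℓ W) : complexify ℓ w ≠ 0 := by
  intro h
  have h1 : ℓ (reVec w) = 0 := congrArg Complex.re h
  have h2 : ℓ (imVec w) = 0 := congrArg Complex.im h
  have := hw.2.2.2
  rw [h1, h2] at this
  norm_num at this

/-- The representative of a point in the affine chart where `ℓ` does not vanish. -/
def affineRep (ℓ : CV n →L[ℂ] ℂ) (z : CP n) : CV n := (ℓ z.rep)⁻¹ • z.rep

theorem affineRep_mk (ℓ : CV n →L[ℂ] ℂ) {w : CV n} (hw : w ≠ 0) :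
    affineRep ℓ (Projectivization.mk ℂ w hw) = (ℓ w)⁻¹ • w := by
  obtain ⟨a, ha⟩ := Projectivization.exists_smul_eq_mk_rep ℂ w hw
  rw [affineRep, ← ha, Units.smul_def, map_smul, smul_eq_mul, mul_inv, smul_smul, mul_right_comm,
    inv_mul_cancel₀ a.ne_zero, one_mul]

theorem continuousOn_affineRep (ℓ : CV n →L[ℂ] ℂ) :
    ContinuousOn (affineRep ℓ) {z : CP n | ℓ z.rep ≠ 0} := by
  have hpre : (fun v : {v : CV n // v ≠ 0} => Projectivization.mk ℂ v.1 v.2) ⁻¹'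
      {z | ℓ z.rep ≠ 0} = {v | ℓ v.1 ≠ 0} := by
    ext v
    obtain ⟨a, ha⟩ := Projectivization.exists_smul_eq_mk_rep ℂ v.1 v.2
    change ℓ _ ≠ 0 ↔ ℓ _ ≠ 0
    rw [← ha, Units.smul_def, map_smul, smul_ne_zero_iff_right a.ne_zero]
  have hc : Continuous fun v : {v : CV n // v ≠ 0} => ℓ v.1 :=
    ℓ.continuous.comp continuous_subtype_val
  have hopen : IsOpen {z : CP n | ℓ z.rep ≠ 0} := by
    rw [← isQuotientMap_projectivization_mk.isOpen_preimage, hpre]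
    exact isOpen_ne_fun hc continuous_const
  rw [isQuotientMap_projectivization_mk.continuousOn_isOpen_iff hopen, hpre]
  have hcomp : affineRep ℓ ∘ (fun v : {v : CV n // v ≠ 0} => Projectivization.mk ℂ v.1 v.2) =
      fun v => (ℓ v.1)⁻¹ • v.1 := funext fun v => affineRep_mk ℓ v.2
  rw [hcomp]
  exact (hc.continuousOn.inv₀ fun _ h => h).smul continuous_subtype_val.continuousOn

theorem eTube_inter_eq_image {D : Set (RP n)} (hD : convexR D) {ℓ : RV n →L[ℝ] ℝ}
    (hℓ : ∀ v ∈ coneOver D, ℓ v = 0 → v = 0) (W : Submodule ℂ (CV n)) (z : CP n) :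
    z ∈ eTube D ∩ {z | z.rep ∈ W} ↔
      ∃ (w : CV n) (hw : w ≠ 0), w ∈ tubeBase D ℓ W ∧ z = Projectivization.mk ℂ w hw := by
  constructor
  · rintro ⟨hz, hzW⟩
    obtain ⟨w, hw, hr, hi, rfl⟩ := exists_halfCone_lift_of_mem_eTube hD hℓ hz
    have hwW : w ∈ W := (mk_rep_mem_iff W hw).1 hzW
    set S := ℓ (reVec w) + ℓ (imVec w) with hS
    have hSpos : 0 < S := by
      refine (add_nonneg hr.2 hi.2).lt_of_ne fun h => ?_
      have h1 := hr.2
      have h2 := hi.2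
      exact complexify_ne_zero_of_mem_halfCone hℓ hw hr hi
        (Complex.ext (by rw [complexify_re]; simp; linarith) (by rw [complexify_im]; simp; linarith))
    have hsm : ∀ v ∈ halfCone D ℓ, S⁻¹ • v ∈ halfCone D ℓ := fun v hv => by
      simpa using smul_add_smul_mem_halfCone hD hℓ hv hv (inv_nonneg.2 hSpos.le) le_rfl
    refine ⟨S⁻¹ • w, smul_ne_zero (inv_ne_zero hSpos.ne') hw,
      ⟨W.smul_of_tower_mem _ hwW, ?_, ?_, ?_⟩, ?_⟩
    · rw [reVec_real_smul]
      exact hsm _ hr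
    · rw [imVec_real_smul]
      exact hsm _ hi
    · rw [reVec_real_smul, imVec_real_smul, map_smul, map_smul, ← smul_add, ← hS, smul_eq_mul,
        inv_mul_cancel₀ hSpos.ne']
    · refine (Projectivization.mk_eq_mk_iff' ..).2 ⟨(S : ℂ), ?_⟩
      ext i
      simp [hSpos.ne']
  · rintro ⟨w, hw, hwB, rfl⟩
    exact ⟨mem_eTube_of_mem_halfCone hD hℓ hw hwB.2.1 hwB.2.2.1, (mk_rep_mem_iff W hw).2 hwB.1⟩

theorem ne_zero_of_mem_perspective_image {D : Set (RP n)} {ℓ : RV n →L[ℝ] ℝ}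
    {W : Submodule ℂ (CV n)} {x : CV n}
    (hx : x ∈ (fun b => (complexify ℓ b)⁻¹ • b) '' tubeBase D ℓ W) : x ≠ 0 := by
  obtain ⟨b, hb, rfl⟩ := hx
  have hb' := complexify_ne_zero_of_mem_tubeBase hb
  exact smul_ne_zero (inv_ne_zero hb') (ne_zero_of_complexify_ne_zero hb')

/-- The trace of the tube on a linear subspace is homeomorphic to the perspective image of its
normalized lifts. -/
def tubeHomeomorph {D : Set (RP n)} (hD : convexR D) {ℓ : RV n →L[ℝ] ℝ}
    (hℓ : ∀ v ∈ coneOver D, ℓ v = 0 → v = 0) (W : Submodule ℂ (CV n)) :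
    ↥(eTube D ∩ {z | z.rep ∈ W}) ≃ₜ
      ↥((fun b => (complexify ℓ b)⁻¹ • b) '' tubeBase D ℓ W) where
  toFun z := ⟨affineRep (complexify ℓ) z, by
    obtain ⟨w, hw, hwB, h⟩ := (eTube_inter_eq_image hD hℓ W z).1 z.2
    rw [h, affineRep_mk]
    exact mem_image_of_mem _ hwB⟩
  invFun x := ⟨Projectivization.mk ℂ x.1 (ne_zero_of_mem_perspective_image x.2), by
    obtain ⟨x, b, hb, rfl⟩ := x
    have hb' := complexify_ne_zero_of_mem_tubeBase hb
    exact (eTube_inter_eq_image hD hℓ W _).2 ⟨b, ne_zero_of_complexify_ne_zero hb', hb,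
      (Projectivization.mk_eq_mk_iff' ..).2 ⟨_, rfl⟩⟩⟩
  left_inv := by
    rintro ⟨z, hz⟩
    obtain ⟨w, hw, hwB, rfl⟩ := (eTube_inter_eq_image hD hℓ W z).1 hz
    apply Subtype.ext
    exact (Projectivization.mk_eq_mk_iff' ..).2 ⟨_, (affineRep_mk _ hw).symm⟩
  right_inv := by
    rintro ⟨x, b, hb, rfl⟩
    have hb' := complexify_ne_zero_of_mem_tubeBase hb
    apply Subtype.ext
    simp only [affineRep_mk, map_smul, smul_eq_mul, inv_mul_cancel₀ hb', inv_one, one_smul]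
  continuous_toFun := by
    refine Continuous.subtype_mk ?_ _
    refine (continuousOn_affineRep (complexify ℓ)).comp_continuous continuous_subtype_val ?_
    rintro ⟨z, hz⟩
    obtain ⟨w, hw, hwB, rfl⟩ := (eTube_inter_eq_image hD hℓ W z).1 hz
    obtain ⟨a, ha⟩ := Projectivization.exists_smul_eq_mk_rep ℂ w hw
    change complexify ℓ _ ≠ 0
    rw [← ha, Units.smul_def, map_smul]
    exact smul_ne_zero a.ne_zero (complexify_ne_zero_of_mem_tubeBase hwB)
  continuous_invFun := by
    refine Continuous.subtype_mk ?_ _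
    exact isQuotientMap_projectivization_mk.continuous.comp
      (continuous_subtype_val.subtype_mk fun x => ne_zero_of_mem_perspective_image x.2)

theorem not_line_subset_eTube {D : Set (RP n)} (hD : convexR D) {ℓ : RV n →L[ℝ] ℝ}
    (hℓ : ∀ v ∈ coneOver D, ℓ v = 0 → v = 0) {L : Set (CP n)} (hL : isLineC L) :
    ¬ L ⊆ eTube D := by
  obtain ⟨W, hW, rfl⟩ := hL
  intro hsub
  have hker := LinearMap.ker_ne_bot_of_finrank_lt
    (f := (complexify ℓ).toLinearMap.comp W.subtype) (by simp [hW])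
  obtain ⟨⟨w, hwW⟩, hw, hw0⟩ := Submodule.exists_mem_ne_zero_of_ne_bot hker
  have hw0 : w ≠ 0 := fun h => hw0 (Subtype.ext h)
  have hw : complexify ℓ w = 0 := hw
  obtain ⟨w', hw', hr, hi, h⟩ := exists_halfCone_lift_of_mem_eTube hD hℓ
    (hsub ((mk_rep_mem_iff W hw0).2 hwW))
  obtain ⟨a, rfl⟩ := (Projectivization.mk_eq_mk_iff' ..).1 h.symm
  exact complexify_ne_zero_of_mem_halfCone hℓ hw' hr hi (by rw [map_smul, hw, smul_zero])

end Tube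

/-- If `D ⊆ ℝℙⁿ` is a compact convex set, then its elliptic tube
`D^e ⊆ ℂℙⁿ` is ℂ-convex. -/
theorem eTube_cConvex_of_compact_convex
    (n : ℕ) (D : Set (RP n)) (hDc : IsCompact D) (hDconv : convexR D) :
    cConvex (eTube D) := by
  have hclosed : IsClosed D := hDc.isClosed
  obtain ⟨ℓ, c, hc, hℓc⟩ := exists_functional_of_symmetric_cone (isClosed_coneOver hclosed)
    smul_mem_coneOver (exists_notMem_coneOver hDconv) (cone_subset_or_of_convexR hDconv)
  have hℓ : ∀ v ∈ coneOver D, ℓ v = 0 → v = 0 := by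
    intro v hv h
    have := hℓc v hv
    rw [h, abs_zero] at this
    exact norm_le_zero_iff.1 (nonpos_of_mul_nonpos_right this hc)
  refine ⟨fun L hL => not_line_subset_eTube hDconv hℓ hL, ?_⟩
  rintro L ⟨W, -, rfl⟩
  have hcontr : (eTube D ∩ {z | z.rep ∈ W}).Nonempty →
      ContractibleSpace ↥(eTube D ∩ {z | z.rep ∈ W}) := by
    rintro ⟨z, hz⟩
    obtain ⟨w, -, hw, -⟩ := (eTube_inter_eq_image hDconv hℓ W z).1 hz
    have := contractibleSpace_perspective_image (isCompact_tubeBase hclosed hc hℓc W)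
      (convex_tubeBase hDconv hℓ W) ⟨w, hw⟩ (complexify ℓ)
      fun b hb => complexify_ne_zero_of_mem_tubeBase hb
    exact (tubeHomeomorph hDconv hℓ W).contractibleSpace
  refine ⟨?_, fun hne => ?_⟩
  · rcases (eTube D ∩ {z | z.rep ∈ W}).eq_empty_or_nonempty with he | hne
    · rw [he]
      exact isPreconnected_empty
    · have := hcontr hne
      exact isPreconnected_iff_preconnectedSpace.2 inferInstance
  · have := hcontr hne
    infer_instance
end
end

section
/- Let Ω ⊆ ℝℙⁿ be an open properly convex set and let Γ be a subgroup of GL(n+1, ℝ) whose induced projective action on ℝℙⁿ preserves Ω and is free on Ω (every γ ∈ Γ fixing some point of Ω is a scalar matrix) and properly discontinuous on Ω (for every compact K ⊆ Ω, the set of classes modulo scalars of elements γ ∈ Γ with γ·K ∩ K ≠ ∅ is finite). Then the induced projective action of Γ (viewed inside GL(n+1, ℂ)) on ℂℙⁿ preserves the elliptic tube Ω^e, and it is free and properly discontinuous on Ω^e in the same sense. -/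
open scoped ComplexConjugate

noncomputable section

/-- Projective hyperplanes in real projective space. -/
def isHypR {n : ℕ} (H : Set (RP n)) : Prop :=
  ∃ ξ : Module.Dual ℝ (RV n), ξ ≠ 0 ∧ H = {x | ξ x.rep = 0}

/-- Proper convexity: convex, not contained in a projective hyperplane, and containing
no affine line (projective line with one point removed). -/
def properlyConvexR {n : ℕ} (D : Set (RP n)) : Prop :=
  convexR D ∧ (∀ H, isHypR H → ¬ D ⊆ H) ∧
    ∀ L, isLineR L → ∀ p ∈ L, ¬ (L \ {p}) ⊆ D

/-- The projective action of `GL(n+1,ℝ)` on real projective space. -/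
def actR {n : ℕ} (g : Matrix.GeneralLinearGroup (Fin (n + 1)) ℝ) (x : RP n) : RP n :=
  Projectivization.mk ℝ ((g : Matrix (Fin (n + 1)) (Fin (n + 1)) ℝ).mulVec x.rep)
    (by
      intro h0
      have h1 : ((↑g⁻¹ : Matrix (Fin (n + 1)) (Fin (n + 1)) ℝ) *
          (↑g : Matrix (Fin (n + 1)) (Fin (n + 1)) ℝ)).mulVec x.rep = 0 := by
        rw [← Matrix.mulVec_mulVec, h0, Matrix.mulVec_zero]
      rw [Units.inv_mul, Matrix.one_mulVec] at h1
      exact x.rep_nonzero h1)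

/-- Complexification of a real matrix. -/
def cMat {n : ℕ} (m : Matrix (Fin (n + 1)) (Fin (n + 1)) ℝ) :
    Matrix (Fin (n + 1)) (Fin (n + 1)) ℂ :=
  m.map (algebraMap ℝ ℂ)

/-- The projective action of the real group `GL(n+1,ℝ) ⊆ GL(n+1,ℂ)` on complex projective
space. -/
def actC {n : ℕ} (g : Matrix.GeneralLinearGroup (Fin (n + 1)) ℝ) (z : CP n) : CP n :=
  Projectivization.mk ℂ ((cMat (↑g : Matrix (Fin (n + 1)) (Fin (n + 1)) ℝ)).mulVec z.rep)
    (by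
      intro h0
      have h1 : (cMat (↑g⁻¹ : Matrix (Fin (n + 1)) (Fin (n + 1)) ℝ) *
          cMat (↑g : Matrix (Fin (n + 1)) (Fin (n + 1)) ℝ)).mulVec z.rep = 0 := by
        rw [← Matrix.mulVec_mulVec, h0, Matrix.mulVec_zero]
      rw [cMat, cMat, ← Matrix.map_mul, Units.inv_mul] at h1
      simp only [Matrix.map_one (algebraMap ℝ ℂ) (map_zero _) (map_one _),
        Matrix.one_mulVec] at h1
      exact z.rep_nonzero h1)

section ConeLift

variable {n : ℕ}

/-- The union of the punctured lines representing the points of `D`. -/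
def vectorLift (D : Set (RP n)) : Set (RV n) :=
  {v | ∃ h : v ≠ 0, Projectivization.mk ℝ v h ∈ D}

lemma mk_mem_iff_mem_vectorLift {D : Set (RP n)} {v : RV n} (h : v ≠ 0) :
    Projectivization.mk ℝ v h ∈ D ↔ v ∈ vectorLift D :=
  ⟨fun hv => ⟨h, hv⟩, fun ⟨_, hv⟩ => hv⟩

lemma rep_mem_vectorLift {D : Set (RP n)} {p : RP n} : p.rep ∈ vectorLift D ↔ p ∈ D := by
  rw [← mk_mem_iff_mem_vectorLift p.rep_nonzero, p.mk_rep]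

lemma smul_mem_vectorLift {D : Set (RP n)} {c : ℝ} (hc : c ≠ 0) {v : RV n}
    (hv : v ∈ vectorLift D) : c • v ∈ vectorLift D := by
  obtain ⟨h, hv⟩ := hv
  refine ⟨smul_ne_zero hc h, ?_⟩
  rwa [(Projectivization.mk_eq_mk_iff' ℝ _ _ _ h).2 ⟨c, rfl⟩]

lemma neg_mem_vectorLift {D : Set (RP n)} {v : RV n} (hv : v ∈ vectorLift D) :
    -v ∈ vectorLift D := by
  simpa using smul_mem_vectorLift (c := -1) (by norm_num) hv

lemma continuous_projectivization_mk' {K V : Type*} [DivisionRing K] [AddCommGroup V]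
    [Module K V] [TopologicalSpace V] :
    Continuous (Projectivization.mk' K : {v : V // v ≠ 0} → Projectivization K V) :=
  continuous_quotient_mk'

lemma isOpen_vectorLift {D : Set (RP n)} (hD : IsOpen D) : IsOpen (vectorLift D) := by
  have h := hD.preimage (continuous_projectivization_mk' (K := ℝ) (V := RV n))
  have h0 : IsOpen {v : RV n | v ≠ 0} := isOpen_ne
  convert! h0.isOpenMap_subtype_val _ h using 1
  ext v
  constructor
  · rintro ⟨h, hv⟩
    exact ⟨⟨v, h⟩, hv, rfl⟩
  · rintro ⟨⟨w, h⟩, hw, rfl⟩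
    exact ⟨h, hw⟩

lemma rep_mk_mem_iff {v : RV n} (h : v ≠ 0) (W : Submodule ℝ (RV n)) :
    (Projectivization.mk ℝ v h).rep ∈ W ↔ v ∈ W := by
  obtain ⟨a, ha⟩ := Projectivization.exists_smul_eq_mk_rep ℝ v h
  rw [← ha, Units.smul_def, W.smul_mem_iff a.ne_zero]

lemma isLineR_span_pair {x y : RV n} (h : LinearIndependent ℝ ![x, y]) :
    isLineR {p : RP n | p.rep ∈ Submodule.span ℝ {x, y}} := by
  refine ⟨_, ?_, rfl⟩
  have := finrank_span_eq_card h
  rwa [Matrix.range_cons_cons_empty, Fintype.card_fin] at this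

/-- The segment between `x` and `y` lies in the lift of `D`. -/
def SegJoined (D : Set (RP n)) (x y : RV n) : Prop :=
  ∀ t ∈ Set.Icc (0 : ℝ) 1, (1 - t) • x + t • y ∈ vectorLift D

namespace SegJoined

variable {D : Set (RP n)} {x y : RV n}

lemma left_mem (h : SegJoined D x y) : x ∈ vectorLift D := by
  simpa using h 0 (by simp)

lemma right_mem (h : SegJoined D x y) : y ∈ vectorLift D := by
  simpa using h 1 (by simp)

lemma symm (h : SegJoined D x y) : SegJoined D y x := fun t ht => by
  have := h (1 - t) ⟨by linarith [ht.2], by linarith [ht.1]⟩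
  rwa [sub_sub_cancel, add_comm] at this

lemma neg (h : SegJoined D x y) : SegJoined D (-x) (-y) := fun t ht => by
  have := neg_mem_vectorLift (h t ht)
  rwa [neg_add, ← smul_neg, ← smul_neg] at this

lemma combo_mem (h : SegJoined D x y) {a b : ℝ} (ha : 0 ≤ a) (hb : 0 ≤ b) (hab : 0 < a + b) :
    a • x + b • y ∈ vectorLift D := by
  have := smul_mem_vectorLift hab.ne'
    (h (b / (a + b)) ⟨by positivity, (div_le_one hab).2 (by linarith)⟩)
  convert! this using 1
  rw [smul_add, smul_smul, smul_smul]
  congr 2 <;> field_simp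
  ring

lemma of_combo_mem (h : ∀ a b : ℝ, 0 ≤ a → 0 ≤ b → 0 < a + b → a • x + b • y ∈ vectorLift D) :
    SegJoined D x y := fun t ht =>
  h (1 - t) t (by linarith [ht.2]) ht.1 (by linarith)

lemma isOpen_setOf (hD : IsOpen D) (x : RV n) : IsOpen {y | SegJoined D x y} := by
  refine isOpen_iff_mem_nhds.2 fun y hy => ?_
  refine isCompact_Icc.eventually_forall_of_forall_eventually fun t ht => ?_
  have hc : Continuous fun q : RV n × ℝ => (1 - q.2) • x + q.2 • q.1 := by fun_prop
  exact ((isOpen_vectorLift hD).preimage hc).mem_nhds (hy t ht)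

end SegJoined

lemma segJoined_or_segJoined_neg {D : Set (RP n)} (hD : convexR D) {x y : RV n}
    (hx : x ∈ vectorLift D) (hy : y ∈ vectorLift D) : SegJoined D x y ∨ SegJoined D x (-y) := by
  obtain ⟨hx0, -⟩ := id hx
  obtain ⟨hy0, -⟩ := id hy
  by_cases hli : LinearIndependent ℝ ![x, y]
  · by_contra! hcon
    simp only [SegJoined, not_forall] at hcon
    obtain ⟨⟨t, ht, hp⟩, ⟨s, hs, hq⟩⟩ := hcon
    have hdual : ∀ a b : RV n, (∀ c : ℝ, c • a ≠ b) →
        ∃ g : RV n →ₗ[ℝ] ℝ, g a = 0 ∧ g b = 1 := by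
      intro a b hab
      have hb : b ∉ Submodule.span ℝ {a} := by
        rw [Submodule.mem_span_singleton]; push Not; exact hab
      obtain ⟨g, hg, hgb⟩ := LinearMap.exists_extend_of_notMem
        (0 : Submodule.span ℝ {a} →ₗ[ℝ] ℝ) hb 1
      refine ⟨g, ?_, hgb⟩
      simpa using DFunLike.congr_fun hg ⟨a, Submodule.mem_span_singleton_self a⟩
    obtain ⟨g, hgx, hgy⟩ := hdual x y ((LinearIndependent.pair_iff' hx0).1 hli)
    obtain ⟨f, hfy, hfx⟩ := hdual y x
      ((LinearIndependent.pair_iff' hy0).1 (LinearIndependent.pair_symm_iff.1 hli))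
    have ht0 : 0 < t := ht.1.lt_of_ne (by rintro rfl; simp [hx] at hp)
    have ht1 : t < 1 := ht.2.lt_of_ne (by rintro rfl; simp [hy] at hp)
    have hs0 : 0 < s := hs.1.lt_of_ne (by rintro rfl; simp [hx] at hq)
    have hs1 : s < 1 := hs.2.lt_of_ne (by
      rintro rfl; simp [neg_mem_vectorLift hy] at hq)
    let Q : RV n → ℝ := fun v => (t * f v - (1 - t) * g v) * (s * f v + (1 - s) * g v)
    have hQc : Continuous Q := by
      have hf := f.continuous_of_finiteDimensional
      have hg := g.continuous_of_finiteDimensional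
      fun_prop
    have hQs : ∀ (c : ℝ) v, Q (c • v) = c ^ 2 * Q v := fun c v => by
      simp only [Q, map_smul, smul_eq_mul]; ring
    have hQrep : ∀ v (h : v ≠ 0), ∃ c : ℝ, 0 < c ∧
        Q (Projectivization.mk ℝ v h).rep = c * Q v := by
      intro v h
      obtain ⟨a, ha⟩ := Projectivization.exists_smul_eq_mk_rep ℝ v h
      refine ⟨(a : ℝ) ^ 2, by have := a.ne_zero; positivity, ?_⟩
      rw [← ha, Units.smul_def, hQs]
    have hopen : ∀ S : Set ℝ, IsOpen S → (∀ c : ℝ, 0 < c → ∀ r, c * r ∈ S ↔ r ∈ S) →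
        IsOpen {p : RP n | Q p.rep ∈ S} := by
      intro S hS hSc
      have : IsOpen (Projectivization.mk' ℝ ⁻¹' {p : RP n | Q p.rep ∈ S}) := by
        convert! hS.preimage (hQc.comp continuous_subtype_val) using 1
        ext ⟨v, h⟩
        obtain ⟨c, hc, hQ⟩ := hQrep v h
        change Q (Projectivization.mk ℝ v h).rep ∈ S ↔ Q v ∈ S
        rw [hQ, hSc c hc]
      exact this
    have hpos := hopen (Set.Ioi 0) isOpen_Ioi fun c hc r => by simp [hc]
    have hneg := hopen (Set.Iio 0) isOpen_Iio fun c hc r => by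
      simp [mul_neg_iff, hc, hc.not_gt]
    have hL := hD.2 _ (isLineR_span_pair hli)
    have hcover : D ∩ {p : RP n | p.rep ∈ Submodule.span ℝ {x, y}} ⊆
        {p : RP n | Q p.rep ∈ Set.Ioi 0} ∪ {p : RP n | Q p.rep ∈ Set.Iio 0} := by
      rintro p ⟨hpD, hpL⟩
      rw [← rep_mem_vectorLift] at hpD
      have hp0 := p.rep_nonzero
      obtain ⟨a, b, hab⟩ := Submodule.mem_span_pair.1 hpL
      rw [Set.mem_union, or_comm]
      refine lt_or_gt_of_ne (a := Q p.rep) (b := 0) fun hQ0 => ?_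
      rw [← hab] at hQ0 hpD hp0
      simp only [Q, map_add, map_smul, hfx, hfy, hgx, hgy, smul_eq_mul, mul_one, mul_zero,
        add_zero, zero_add, mul_eq_zero] at hQ0
      rcases hQ0 with hQ0 | hQ0
      · have hb : b ≠ 0 := by
          rintro rfl
          simp only [mul_zero, sub_zero, mul_eq_zero, ht0.ne', false_or] at hQ0
          simp [hQ0] at hp0
        have hv : ((1 - t) • x + t • y) = (t / b) • (a • x + b • y) := by
          rw [smul_add, smul_smul, smul_smul]
          congr 2 <;> field_simp
          linarith
        exact hp (hv ▸ smul_mem_vectorLift (div_ne_zero ht0.ne' hb) hpD)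
      · have hb : b ≠ 0 := by
          rintro rfl
          simp only [mul_zero, add_zero, mul_eq_zero, hs0.ne', false_or] at hQ0
          simp [hQ0] at hp0
        have hv : ((1 - s) • x + s • -y) = (-s / b) • (a • x + b • y) := by
          rw [smul_add, smul_smul, smul_smul, smul_neg, ← neg_smul]
          congr 2 <;> field_simp
          linarith
        exact hq (hv ▸ smul_mem_vectorLift (div_ne_zero (neg_ne_zero.2 hs0.ne') hb) hpD)
    have hxS : Q x = t * s := by simp [Q, hfx, hgx]
    have hyS : Q y = -((1 - t) * (1 - s)) := by simp only [Q, hfy, hgy]; ring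
    obtain ⟨p, -, hp1, hp2⟩ := hL _ _ hpos hneg hcover
      ⟨Projectivization.mk ℝ x hx0, ⟨(mk_mem_iff_mem_vectorLift _).2 hx,
        (rep_mk_mem_iff _ _).2 (Submodule.subset_span (by simp))⟩, by
        obtain ⟨c, hc, hQ⟩ := hQrep x hx0
        change 0 < Q _
        rw [hQ, hxS]; positivity⟩
      ⟨Projectivization.mk ℝ y hy0, ⟨(mk_mem_iff_mem_vectorLift _).2 hy,
        (rep_mk_mem_iff _ _).2 (Submodule.subset_span (by simp))⟩, by
        obtain ⟨c, hc, hQ⟩ := hQrep y hy0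
        change Q _ < 0
        rw [hQ, hyS]
        have : 0 < c * ((1 - t) * (1 - s)) :=
          mul_pos hc (mul_pos (sub_pos.2 ht1) (sub_pos.2 hs1))
        linarith⟩
    exact lt_asymm (a := 0) (b := Q p.rep) hp1 hp2
  · rw [LinearIndependent.pair_iff' hx0] at hli
    push Not at hli
    obtain ⟨c, rfl⟩ := hli
    rcases lt_trichotomy c 0 with hc | rfl | hc
    · refine Or.inr (SegJoined.of_combo_mem fun a b ha hb hab => ?_)
      rw [← neg_smul, smul_smul, ← add_smul]
      refine smul_mem_vectorLift (ne_of_gt ?_) hx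
      rcases hb.eq_or_lt with rfl | hb
      · simpa using hab
      · nlinarith
    · simp at hy0
    · refine Or.inl (SegJoined.of_combo_mem fun a b ha hb hab => ?_)
      rw [smul_smul, ← add_smul]
      refine smul_mem_vectorLift (ne_of_gt ?_) hx
      rcases hb.eq_or_lt with rfl | hb
      · simpa using hab
      · nlinarith

lemma SegJoined.not_segJoined_neg {D : Set (RP n)} (hD : convexR D) {x y : RV n}
    (h : SegJoined D x y) : ¬ SegJoined D x (-y) := by
  intro h'
  obtain ⟨hx0, -⟩ := id h.left_mem
  obtain ⟨hy0, -⟩ := id h.right_mem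
  have hzero : (0 : RV n) ∉ vectorLift D := fun ⟨h0, _⟩ => h0 rfl
  by_cases hli : LinearIndependent ℝ ![x, y]
  · refine hD.1 _ (isLineR_span_pair hli) fun p hp => ?_
    obtain ⟨a, b, hab⟩ := Submodule.mem_span_pair.1 hp
    have hp0 := p.rep_nonzero
    rw [← rep_mem_vectorLift, ← hab]
    rw [← hab] at hp0
    have hne : a ≠ 0 ∨ b ≠ 0 := by
      by_contra! hcon
      simp [hcon.1, hcon.2] at hp0
    have hpos : 0 < |a| + |b| := by
      rcases hne with h | h
      · have := abs_pos.2 h; positivity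
      · have := abs_pos.2 h; positivity
    rcases le_total 0 a with ha | ha <;> rcases le_total 0 b with hb | hb
    · exact h.combo_mem ha hb (by rwa [abs_of_nonneg ha, abs_of_nonneg hb] at hpos)
    · have := h'.combo_mem ha (neg_nonneg.2 hb)
        (by rwa [abs_of_nonneg ha, abs_of_nonpos hb] at hpos)
      rwa [neg_smul_neg] at this
    · have := h'.neg.combo_mem (neg_nonneg.2 ha) hb
        (by rwa [abs_of_nonpos ha, abs_of_nonneg hb] at hpos)
      rwa [neg_neg, neg_smul_neg] at this
    · have := h.neg.combo_mem (neg_nonneg.2 ha) (neg_nonneg.2 hb)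
        (by rwa [abs_of_nonpos ha, abs_of_nonpos hb] at hpos)
      rwa [neg_smul_neg, neg_smul_neg] at this
  · rw [LinearIndependent.pair_iff' hx0] at hli
    push Not at hli
    obtain ⟨c, rfl⟩ := hli
    rcases le_total c 0 with hc | hc
    · refine hzero ?_
      have := h.combo_mem (neg_nonneg.2 hc) zero_le_one (by linarith)
      simpa using this
    · refine hzero ?_
      have := h'.combo_mem hc zero_le_one (by linarith)
      simpa using this

lemma SegJoined.trans {D : Set (RP n)} (hDo : IsOpen D) (hD : convexR D) {x y z : RV n}
    (hxy : SegJoined D x y) (hyz : SegJoined D y z) : SegJoined D x z := by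
  by_contra hxz
  have hxz' : SegJoined D z (-x) := by
    have := ((segJoined_or_segJoined_neg hD hxy.left_mem hyz.right_mem).resolve_left hxz).symm.neg
    rwa [neg_neg] at this
  have hc : Continuous fun t : ℝ => (1 - t) • x + t • y := by fun_prop
  obtain ⟨t, -, hA, hB⟩ := isPreconnected_Icc (a := (0 : ℝ)) (b := 1)
    _ _ ((SegJoined.isOpen_setOf hDo z).preimage hc)
    ((SegJoined.isOpen_setOf hDo z).preimage hc.neg)
    (fun t ht => segJoined_or_segJoined_neg hD hyz.right_mem (hxy t ht))
    ⟨1, by simp, by simpa using hyz.symm⟩ ⟨0, by simp, by simpa using hxz'⟩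
  exact SegJoined.not_segJoined_neg hD hA hB

/-- `C` is an open convex cone containing no affine line, and the lift of `D` is `C ∪ -C`. -/
structure IsConeLift (D : Set (RP n)) (C : Set (RV n)) : Prop where
  isOpen : IsOpen C
  convex : Convex ℝ C
  smul_mem : ∀ c : ℝ, 0 < c → ∀ v ∈ C, c • v ∈ C
  zero_notMem : (0 : RV n) ∉ C
  mem_vectorLift : ∀ v, v ∈ vectorLift D ↔ v ∈ C ∨ -v ∈ C
  exists_notMem : ∀ u ∈ C, ∀ v : RV n, v ≠ 0 → ∃ t : ℝ, u + t • v ∉ C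

theorem exists_isConeLift {D : Set (RP n)} (hDo : IsOpen D) (hD : properlyConvexR D) :
    ∃ C, IsConeLift D C := by
  obtain ⟨hconv, hhyp, hline⟩ := hD
  obtain ⟨p, hp⟩ : D.Nonempty := by
    rw [Set.nonempty_iff_ne_empty]
    rintro rfl
    exact hhyp _ ⟨LinearMap.proj 0, fun h => by
      simpa using DFunLike.congr_fun h (fun _ => 1), rfl⟩ (Set.empty_subset _)
  set x₀ := p.rep
  have hx₀ : x₀ ∈ vectorLift D := rep_mem_vectorLift.2 hp
  have hself : ∀ x ∈ vectorLift D, ∀ c : ℝ, 0 < c → SegJoined D x (c • x) := fun x hx c hc =>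
    SegJoined.of_combo_mem fun a b ha hb hab => by
      rw [smul_smul, ← add_smul]
      refine smul_mem_vectorLift (ne_of_gt ?_) hx
      rcases hb.eq_or_lt with rfl | hb
      · simpa using hab
      · nlinarith [mul_pos hb hc]
  have hzero : (0 : RV n) ∉ vectorLift D := fun ⟨h0, _⟩ => h0 rfl
  have h0C : (0 : RV n) ∉ {y | SegJoined D x₀ y} := fun h => hzero h.right_mem
  have hmem : ∀ v, v ∈ vectorLift D ↔
      v ∈ {y | SegJoined D x₀ y} ∨ -v ∈ {y | SegJoined D x₀ y} := by
    refine fun v => ⟨fun hv => segJoined_or_segJoined_neg hconv hx₀ hv, ?_⟩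
    rintro (h | h)
    · exact h.right_mem
    · simpa using neg_mem_vectorLift h.right_mem
  have hcone : ∀ c : ℝ, 0 < c → ∀ v ∈ {y | SegJoined D x₀ y}, c • v ∈ {y | SegJoined D x₀ y} :=
    fun c hc v hv => SegJoined.trans hDo hconv hv (hself v hv.right_mem c hc)
  refine ⟨{y | SegJoined D x₀ y}, SegJoined.isOpen_setOf hDo x₀, ?_, hcone, h0C, hmem, ?_⟩
  · intro y hy z hz a b ha hb hab
    have hyz := SegJoined.trans hDo hconv (SegJoined.symm hy) hz
    refine SegJoined.trans hDo hconv hy (SegJoined.of_combo_mem fun c d hc hd hcd => ?_)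
    rw [smul_add, ← add_assoc, smul_smul, smul_smul, ← add_smul]
    refine hyz.combo_mem (by positivity) (by positivity) ?_
    have : c + d * a + d * b = c + d := by rw [add_assoc, ← mul_add, hab, mul_one]
    linarith
  · intro u hu v hv
    by_contra! hcon
    obtain ⟨hu0, -⟩ := id (SegJoined.right_mem hu)
    have hli : LinearIndependent ℝ ![u, v] := by
      rw [LinearIndependent.pair_iff' hu0]
      rintro c rfl
      have hc : c ≠ 0 := by rintro rfl; simp at hv
      have := hcon (-c⁻¹)
      rw [smul_smul, neg_mul, inv_mul_cancel₀ hc, neg_one_smul, add_neg_cancel] at this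
      exact h0C this
    refine hline _ (isLineR_span_pair hli) (Projectivization.mk ℝ v hv)
      ((rep_mk_mem_iff _ _).2 (Submodule.subset_span (by simp))) ?_
    rintro q ⟨hq, hqv⟩
    obtain ⟨a, b, hab⟩ := Submodule.mem_span_pair.1 hq
    have ha : a ≠ 0 := by
      rintro rfl
      refine hqv ?_
      rw [Set.mem_singleton_iff, ← q.mk_rep, Projectivization.mk_eq_mk_iff']
      exact ⟨b, by rw [← hab, zero_smul, zero_add]⟩
    rw [← rep_mem_vectorLift, ← hab]
    have := smul_mem_vectorLift ha (SegJoined.right_mem (hcon (b / a)))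
    rwa [smul_add, smul_smul, mul_div_cancel₀ _ ha] at this

end ConeLift

section ConeDuality

variable {n : ℕ} {D : Set (RP n)} {C : Set (RV n)}

namespace IsConeLift

lemma combo_mem (hC : IsConeLift D C) {u v : RV n} (hu : u ∈ C) (hv : v ∈ C) {a b : ℝ}
    (ha : 0 ≤ a) (hb : 0 ≤ b) (hab : 0 < a + b) : a • u + b • v ∈ C := by
  have h := hC.smul_mem _ hab _ (hC.convex hu hv (a := a / (a + b)) (b := b / (a + b))
    (by positivity) (by positivity) (by field_simp))
  rwa [smul_add, smul_smul, smul_smul, mul_div_cancel₀ _ hab.ne', mul_div_cancel₀ _ hab.ne'] at h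

lemma mem_of_add_mem_of_sub_mem (hC : IsConeLift D C) {u w : RV n} (hp : u + w ∈ C)
    (hm : u - w ∈ C) : u ∈ C := by
  have h := hC.combo_mem hp hm (a := 1 / 2) (b := 1 / 2) (by norm_num) (by norm_num) (by norm_num)
  rwa [← smul_add, add_add_sub_cancel, ← two_smul ℝ u, smul_smul, div_mul_cancel₀ _ two_ne_zero,
    one_smul] at h

lemma ne_zero_of_mem (hC : IsConeLift D C) {u : RV n} (hu : u ∈ C) : u ≠ 0 :=
  fun h => hC.zero_notMem (h ▸ hu)

lemma exists_pos_functional (hC : IsConeLift D C) :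
    ∃ f : RV n →L[ℝ] ℝ, ∀ v ∈ C, 0 < f v := by
  obtain ⟨f, hf⟩ := geometric_hahn_banach_open_point hC.convex hC.isOpen hC.zero_notMem
  exact ⟨-f, fun v hv => by simpa using hf v hv⟩

lemma mem_of_forall_functional (hC : IsConeLift D C) {u₀ u : RV n} (hu₀ : u₀ ∈ C) {c : ℝ}
    (hc : 0 < c) (h : ∀ f : RV n →L[ℝ] ℝ, (∀ v ∈ C, 0 ≤ f v) → c * f u₀ ≤ f u) : u ∈ C := by
  by_contra hu
  obtain ⟨f, hf⟩ := geometric_hahn_banach_open_point hC.convex hC.isOpen hu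
  have hnonpos : ∀ v ∈ C, f v ≤ 0 := by
    intro v hv
    by_contra! hpos
    have := hf _ (hC.smul_mem ((|f u| + 1) / f v) (by positivity) v hv)
    rw [map_smul, smul_eq_mul, div_mul_cancel₀ _ hpos.ne'] at this
    linarith [le_abs_self (f u)]
  have hfu := h (-f) fun v hv => by simpa using hnonpos v hv
  simp only [neg_apply, mul_neg, neg_le_neg_iff] at hfu
  have hlt := hf _ (hC.smul_mem c hc u₀ hu₀)
  rw [map_smul, smul_eq_mul] at hlt
  exact absurd hfu (not_le.2 hlt)

/-- The elements comparable to `u₀` up to a factor `4` in the order of the cone `C` form a compact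
set. -/
lemma isCompact_setOf_comparable (hC : IsConeLift D C) {u₀ : RV n} (hu₀ : u₀ ∈ C) :
    IsCompact {u : RV n | ∀ f : RV n →L[ℝ] ℝ, (∀ v ∈ C, 0 ≤ f v) →
      1 / 4 * f u₀ ≤ f u ∧ f u ≤ 4 * f u₀} := by
  set S := {u : RV n | ∀ f : RV n →L[ℝ] ℝ, (∀ v ∈ C, 0 ≤ f v) →
      1 / 4 * f u₀ ≤ f u ∧ f u ≤ 4 * f u₀} with hS
  have hclosed : IsClosed S := by
    simp only [hS, Set.ofPred_forall, Set.ofPred_and]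
    exact isClosed_iInter fun f => isClosed_iInter fun _ =>
      (isClosed_le continuous_const f.continuous).inter (isClosed_le f.continuous continuous_const)
  refine Metric.isCompact_of_isClosed_isBounded hclosed ?_
  by_contra hbdd
  have hlarge : ∀ k : ℕ, ∃ u ∈ S, (k : ℝ) < ‖u‖ := by
    intro k
    by_contra! hk
    exact hbdd ((Metric.isBounded_closedBall (x := (0 : RV n)) (r := k)).subset fun u hu => by
      simpa using hk u hu)
  choose u huS hunorm using hlarge
  have hupos : ∀ k, 0 < ‖u k‖ := fun k => (Nat.cast_nonneg k).trans_lt (hunorm k)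
  obtain ⟨v, hv, φ, hφ, hlim⟩ := (isCompact_sphere (0 : RV n) 1).tendsto_subseq
    (x := fun k => ‖u k‖⁻¹ • u k) fun k => by
      simp [norm_smul, (hupos k).ne']
  have hinv : Filter.Tendsto (fun k => ‖u (φ k)‖⁻¹) Filter.atTop (nhds 0) :=
    (tendsto_inv_atTop_zero.comp (Filter.tendsto_atTop_mono (fun k => (hunorm k).le)
      tendsto_natCast_atTop_atTop)).comp hφ.tendsto_atTop
  have hfv : ∀ f : RV n →L[ℝ] ℝ, (∀ v ∈ C, 0 ≤ f v) → f v = 0 := by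
    intro f hf
    have h1 := (f.continuous.tendsto v).comp hlim
    refine le_antisymm ?_ ?_
    · have h2 : Filter.Tendsto (fun k => ‖u (φ k)‖⁻¹ * (4 * f u₀)) Filter.atTop (nhds 0) := by
        simpa using hinv.mul_const (4 * f u₀)
      refine le_of_tendsto_of_tendsto' h1 h2 fun k => ?_
      simp only [Function.comp_apply, map_smul, smul_eq_mul]
      exact mul_le_mul_of_nonneg_left (huS (φ k) f hf).2 (by positivity)
    · refine ge_of_tendsto' h1 fun k => ?_
      simp only [Function.comp_apply, map_smul, smul_eq_mul]
      have := (huS (φ k) f hf).1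
      have := hf u₀ hu₀
      exact mul_nonneg (by positivity) (by linarith)
  have hv0 : v ≠ 0 := by
    rintro rfl
    simp at hv
  obtain ⟨t, ht⟩ := hC.exists_notMem u₀ hu₀ v hv0
  refine ht (hC.mem_of_forall_functional hu₀ zero_lt_one fun f hf => ?_)
  simp [hfv f hf]

lemma exists_smul_mapsTo (hC : IsConeLift D C) (T : RV n →ₗ[ℝ] RV n)
    (hT : ∀ v ∈ vectorLift D, T v ∈ vectorLift D) :
    ∃ σ : ℝ, σ ≠ 0 ∧ ∀ v ∈ C, σ • T v ∈ C := by
  obtain ⟨f, hf⟩ := hC.exists_pos_functional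
  have hCT : ∀ v ∈ C, T v ∈ C ∨ -T v ∈ C := fun v hv =>
    (hC.mem_vectorLift _).1 (hT v ((hC.mem_vectorLift v).2 (Or.inl hv)))
  have hmix : ∀ u ∈ C, ∀ v ∈ C, T u ∈ C → T v ∈ C := by
    intro u hu v hv hTu
    refine (hCT v hv).resolve_right fun hTv => ?_
    have hfu := hf _ hTu
    have hfv := hf _ hTv
    rw [map_neg] at hfv
    have hzero : f (T ((-f (T v)) • u + f (T u) • v)) = 0 := by
      simp only [map_add, map_smul, smul_eq_mul]; ring
    rcases hCT _ (hC.combo_mem hu hv hfv.le hfu.le (by positivity)) with h | h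
    · exact (hf _ h).ne' hzero
    · have := hf _ h
      rw [map_neg, hzero] at this
      simp at this
  by_cases h : ∃ u ∈ C, T u ∈ C
  · obtain ⟨u, hu, hTu⟩ := h
    exact ⟨1, one_ne_zero, fun v hv => by simpa using hmix u hu v hv hTu⟩
  · push Not at h
    exact ⟨-1, by norm_num, fun v hv => by simpa using (hCT v hv).resolve_left (h v hv)⟩

end IsConeLift

end ConeDuality

section ComplexVectors

variable {n : ℕ}

/-- The complex vector with real part `u` and imaginary part `w`. -/
def cvec (u w : RV n) : CV n := fun i => ⟨u i, w i⟩

lemma smul_cplx_add_smul_cplx (c₀ c₁ : ℂ) (v₀ v₁ : RV n) :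
    c₀ • cplx v₀ + c₁ • cplx v₁ =
      cvec (c₀.re • v₀ + c₁.re • v₁) (c₀.im • v₀ + c₁.im • v₁) := by
  ext i
  apply Complex.ext <;> simp [cplx, cvec]

lemma smul_cvec (c : ℂ) (u w : RV n) :
    c • cvec u w = cvec (c.re • u - c.im • w) (c.im • u + c.re • w) := by
  ext i
  apply Complex.ext
  · simp [cvec]
  · simp [cvec]; ring

lemma cvec_inj {u w u' w' : RV n} : cvec u w = cvec u' w' ↔ u = u' ∧ w = w' := by
  constructor
  · intro h
    exact ⟨funext fun i => congrArg Complex.re (congrFun h i),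
      funext fun i => congrArg Complex.im (congrFun h i)⟩
  · rintro ⟨rfl, rfl⟩
    rfl

lemma cvec_ne_zero {u w : RV n} (hu : u ≠ 0) : cvec u w ≠ 0 := fun h =>
  hu (funext fun i => congrArg Complex.re (congrFun h i))

lemma cMat_mulVec_cvec (M : Matrix (Fin (n + 1)) (Fin (n + 1)) ℝ) (u w : RV n) :
    (cMat M).mulVec (cvec u w) = cvec (M.mulVec u) (M.mulVec w) := by
  ext i
  apply Complex.ext <;> simp [cMat, cvec, Matrix.mulVec, dotProduct]

lemma cMat_mulVec_cplx (M : Matrix (Fin (n + 1)) (Fin (n + 1)) ℝ) (u : RV n) :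
    (cMat M).mulVec (cplx u) = cplx (M.mulVec u) :=
  cMat_mulVec_cvec M u 0 |>.trans (by rw [Matrix.mulVec_zero]; rfl)

lemma mulVec_ne_zero (γ : Matrix.GeneralLinearGroup (Fin (n + 1)) ℝ) {v : RV n} (hv : v ≠ 0) :
    (γ : Matrix (Fin (n + 1)) (Fin (n + 1)) ℝ).mulVec v ≠ 0 := fun h => hv (by
  simpa [Matrix.mulVec_mulVec] using
    congrArg ((↑γ⁻¹ : Matrix (Fin (n + 1)) (Fin (n + 1)) ℝ).mulVec) h)

lemma cMat_mulVec_ne_zero (γ : Matrix.GeneralLinearGroup (Fin (n + 1)) ℝ) {v : CV n}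
    (hv : v ≠ 0) : (cMat (γ : Matrix (Fin (n + 1)) (Fin (n + 1)) ℝ)).mulVec v ≠ 0 := by
  intro h
  have hv' : v = cvec (fun i => (v i).re) (fun i => (v i).im) := rfl
  rw [hv', cMat_mulVec_cvec, show (0 : CV n) = cvec 0 0 from rfl, cvec_inj] at h
  refine hv ?_
  rw [hv', show (0 : CV n) = cvec 0 0 from rfl, cvec_inj]
  exact ⟨not_not.1 fun h0 => mulVec_ne_zero γ h0 h.1, not_not.1 fun h0 => mulVec_ne_zero γ h0 h.2⟩

lemma actR_mk (γ : Matrix.GeneralLinearGroup (Fin (n + 1)) ℝ) {v : RV n} (hv : v ≠ 0) :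
    actR γ (Projectivization.mk ℝ v hv) = Projectivization.mk ℝ _ (mulVec_ne_zero γ hv) := by
  obtain ⟨a, ha⟩ := Projectivization.exists_smul_eq_mk_rep ℝ v hv
  rw [actR, Projectivization.mk_eq_mk_iff']
  exact ⟨a, by rw [← ha, Units.smul_def, Matrix.mulVec_smul]⟩

lemma actC_mk (γ : Matrix.GeneralLinearGroup (Fin (n + 1)) ℝ) {v : CV n} (hv : v ≠ 0) :
    actC γ (Projectivization.mk ℂ v hv) = Projectivization.mk ℂ _ (cMat_mulVec_ne_zero γ hv) := by
  obtain ⟨a, ha⟩ := Projectivization.exists_smul_eq_mk_rep ℂ v hv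
  rw [actC, Projectivization.mk_eq_mk_iff']
  exact ⟨a, by rw [← ha, Units.smul_def, Matrix.mulVec_smul]⟩

lemma actC_actC_inv (γ : Matrix.GeneralLinearGroup (Fin (n + 1)) ℝ) (z : CP n) :
    actC γ (actC γ⁻¹ z) = z := by
  induction z using Projectivization.ind with | _ v hv =>
  simp only [actC_mk, Matrix.mulVec_mulVec]
  congr 1
  rw [cMat, cMat, ← Matrix.map_mul, Units.mul_inv,
    Matrix.map_one (algebraMap ℝ ℂ) (map_zero _) (map_one _), Matrix.one_mulVec]

lemma mulVec_mem_vectorLift {D : Set (RP n)} {γ : Matrix.GeneralLinearGroup (Fin (n + 1)) ℝ}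
    (hγ : actR γ '' D = D) {v : RV n} (hv : v ∈ vectorLift D) :
    (γ : Matrix (Fin (n + 1)) (Fin (n + 1)) ℝ).mulVec v ∈ vectorLift D := by
  obtain ⟨h, hv⟩ := hv
  refine ⟨mulVec_ne_zero γ h, ?_⟩
  rw [← actR_mk γ h, ← hγ]
  exact Set.mem_image_of_mem _ hv

lemma mapsTo_actC_eTube {D : Set (RP n)} {γ : Matrix.GeneralLinearGroup (Fin (n + 1)) ℝ}
    (hγ : actR γ '' D = D) : Set.MapsTo (actC γ) (eTube D) (eTube D) := by
  intro z hz
  simp only [eTube, Set.mem_iUnion] at hz ⊢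
  obtain ⟨v₀, v₁, hv₀, hv₁, hseg, c₀, c₁, hc, h, rfl⟩ := hz
  refine ⟨_, _, mulVec_ne_zero γ hv₀, mulVec_ne_zero γ hv₁, ?_, c₀, c₁, hc, ?_⟩
  · rintro x ⟨a, b, hab, hne, rfl⟩
    rw [mk_mem_iff_mem_vectorLift]
    simp only [← Matrix.mulVec_smul, ← Matrix.mulVec_add] at hne ⊢
    have hne' : a • v₀ + b • v₁ ≠ 0 := fun h0 => hne (by rw [h0, Matrix.mulVec_zero])
    exact mulVec_mem_vectorLift hγ
      ((mk_mem_iff_mem_vectorLift hne').1 (hseg ⟨a, b, hab, hne', rfl⟩))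
  · simp only [← cMat_mulVec_cplx, ← Matrix.mulVec_smul, ← Matrix.mulVec_add]
    exact ⟨cMat_mulVec_ne_zero γ h, actC_mk γ h⟩

lemma exists_eq_smul_of_actR_eq {γ δ : Matrix.GeneralLinearGroup (Fin (n + 1)) ℝ}
    (h : (actR γ : RP n → RP n) = actR δ) :
    ∃ a : ℝ, (γ : Matrix (Fin (n + 1)) (Fin (n + 1)) ℝ) =
      a • (δ : Matrix (Fin (n + 1)) (Fin (n + 1)) ℝ) := by
  set M : Matrix (Fin (n + 1)) (Fin (n + 1)) ℝ :=
    (↑δ⁻¹ : Matrix (Fin (n + 1)) (Fin (n + 1)) ℝ) *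
      (γ : Matrix (Fin (n + 1)) (Fin (n + 1)) ℝ) with hM
  obtain ⟨a, ha⟩ := (Matrix.toLin' M).exists_eq_smul_id_of_forall_notLinearIndependent
    fun v : RV n => by
      by_cases hv : v = 0
      · simp [hv, linearIndependent_fin2]
      · rw [LinearIndependent.pair_iff' hv]
        push Not
        have hmk := congrFun h (Projectivization.mk ℝ v hv)
        rw [actR_mk, actR_mk, Projectivization.mk_eq_mk_iff'] at hmk
        obtain ⟨a, ha⟩ := hmk
        refine ⟨a, ?_⟩
        rw [Matrix.toLin'_apply, hM, ← Matrix.mulVec_mulVec, ← ha, Matrix.mulVec_smul,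
          Matrix.mulVec_mulVec, Units.inv_mul, Matrix.one_mulVec]
  refine ⟨a, ?_⟩
  have hMa : M = a • 1 := by
    apply Matrix.toLin'.injective
    rw [ha, map_smul, Matrix.toLin'_one]
    rfl
  calc (γ : Matrix (Fin (n + 1)) (Fin (n + 1)) ℝ) = ↑δ * M := by
        rw [hM, ← mul_assoc, Units.mul_inv, one_mul]
    _ = a • ↑δ := by rw [hMa, Matrix.mul_smul, mul_one]

lemma actC_eq_of_actR_eq {γ δ : Matrix.GeneralLinearGroup (Fin (n + 1)) ℝ}
    (h : (actR γ : RP n → RP n) = actR δ) : (actC γ : CP n → CP n) = actC δ := by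
  obtain ⟨a, ha⟩ := exists_eq_smul_of_actR_eq h
  funext z
  induction z using Projectivization.ind with | _ v hv =>
  rw [actC_mk, actC_mk, Projectivization.mk_eq_mk_iff']
  refine ⟨a, ?_⟩
  rw [ha, cMat, cMat, ← Matrix.smul_mulVec]
  congr 1
  ext i j
  simp

end ComplexVectors

section EllipticTube

variable {n : ℕ} {D : Set (RP n)} {C : Set (RV n)}

lemma exists_rotation_into_quarter_cone {c₀ c₁ : ℂ} (hre : 0 ≤ (c₀ * conj c₁).re)
    (hne : c₀ ≠ 0 ∨ c₁ ≠ 0) :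
    ∃ l : ℂ, |(l * c₀).im| ≤ (l * c₀).re ∧ |(l * c₁).im| ≤ (l * c₁).re ∧
      0 < ((l * c₀).re + (l * c₀).im) + ((l * c₁).re + (l * c₁).im) ∧
      0 < ((l * c₀).re - (l * c₀).im) + ((l * c₁).re - (l * c₁).im) := by
  by_cases h₁ : c₁ = 0
  · have h₀ : c₀ ≠ 0 := hne.resolve_right (not_not.2 h₁)
    exact ⟨c₀⁻¹, by simp [h₀, h₁]⟩
  by_cases h₀ : c₀ = 0
  · exact ⟨c₁⁻¹, by simp [h₀, h₁]⟩
  set p := ‖c₀‖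
  set q := ‖c₁‖
  have hp0 : 0 < p := norm_pos_iff.2 h₀
  have hq0 : 0 < q := norm_pos_iff.2 h₁
  set e := c₀ * conj c₁ with he
  have hnorm : ‖e‖ = p * q := by rw [he, norm_mul, RCLike.norm_conj]
  have him : |e.im| ≤ p * q := hnorm ▸ Complex.abs_im_le_norm e
  have hl₀ : (q * conj c₀ + p * conj c₁) * c₀ = (p : ℂ) * (p * q + e) := by
    have := Complex.mul_conj' c₀
    linear_combination (q : ℂ) * this
  have hl₁ : (q * conj c₀ + p * conj c₁) * c₁ = (q : ℂ) * (p * q + conj e) := by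
    have := Complex.mul_conj' c₁
    rw [he, map_mul, Complex.conj_conj]
    linear_combination (p : ℂ) * this
  obtain ⟨him₁, him₂⟩ := abs_le.1 him
  have hpq : 0 < p * q := mul_pos hp0 hq0
  have hre₀ : ((q * conj c₀ + p * conj c₁) * c₀).re = p * (p * q + e.re) := by
    rw [hl₀]; simp
  have him₀ : ((q * conj c₀ + p * conj c₁) * c₀).im = p * e.im := by
    rw [hl₀]; simp
  have hre₁ : ((q * conj c₀ + p * conj c₁) * c₁).re = q * (p * q + e.re) := by
    rw [hl₁]; simp
  have him₁' : ((q * conj c₀ + p * conj c₁) * c₁).im = q * -e.im := by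
    rw [hl₁]; simp
  refine ⟨q * conj c₀ + p * conj c₁, ?_, ?_, ?_, ?_⟩
  · rw [hre₀, him₀, abs_mul, abs_of_pos hp0]
    exact mul_le_mul_of_nonneg_left (by linarith) hp0.le
  · rw [hre₁, him₁', abs_mul, abs_of_pos hq0, abs_neg]
    exact mul_le_mul_of_nonneg_left (by linarith) hq0.le
  · rw [hre₀, him₀, hre₁, him₁', ← mul_add, ← mul_add]
    rcases le_total 0 e.im with h | h
    · have : 0 < p * (p * q + e.re + e.im) := by positivity
      have : 0 ≤ q * (p * q + e.re + -e.im) := mul_nonneg hq0.le (by linarith)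
      linarith
    · have : 0 ≤ p * (p * q + e.re + e.im) := mul_nonneg hp0.le (by linarith)
      have : 0 < q * (p * q + e.re + -e.im) := mul_pos hq0 (by linarith)
      linarith
  · rw [hre₀, him₀, hre₁, him₁', ← mul_sub, ← mul_sub]
    rcases le_total 0 e.im with h | h
    · have : 0 ≤ p * (p * q + e.re - e.im) := mul_nonneg hp0.le (by linarith)
      have : 0 < q * (p * q + e.re - -e.im) := mul_pos hq0 (by linarith)
      linarith
    · have : 0 < p * (p * q + e.re - e.im) := mul_pos hp0 (by linarith)
      have : 0 ≤ q * (p * q + e.re - -e.im) := mul_nonneg hq0.le (by linarith)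
      linarith

lemma IsConeLift.exists_cvec_of_combo (hC : IsConeLift D C) {v₀ v₁ : RV n} (h₀ : v₀ ∈ C)
    (h₁ : v₁ ∈ C) {c₀ c₁ : ℂ} (hre : 0 ≤ (c₀ * conj c₁).re)
    (hne : c₀ • cplx v₀ + c₁ • cplx v₁ ≠ 0) :
    ∃ u w : RV n, u + w ∈ C ∧ u - w ∈ C ∧
      ∃ l : ℂ, l • (c₀ • cplx v₀ + c₁ • cplx v₁) = cvec u w := by
  have hc : c₀ ≠ 0 ∨ c₁ ≠ 0 := by
    by_contra! h
    simp [h.1, h.2] at hne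
  obtain ⟨l, hq₀, hq₁, hp, hm⟩ := exists_rotation_into_quarter_cone hre hc
  obtain ⟨hq₀m, hq₀p⟩ := abs_le.1 hq₀
  obtain ⟨hq₁m, hq₁p⟩ := abs_le.1 hq₁
  refine ⟨(l * c₀).re • v₀ + (l * c₁).re • v₁, (l * c₀).im • v₀ + (l * c₁).im • v₁, ?_, ?_, l, ?_⟩
  · have := hC.combo_mem h₀ h₁ (by linarith) (by linarith) hp
    convert! this using 1
    module
  · have := hC.combo_mem h₀ h₁ (by linarith) (by linarith) hm
    convert! this using 1
    module
  · rw [smul_add, smul_smul, smul_smul, smul_cplx_add_smul_cplx]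

lemma IsConeLift.exists_cvec_of_seg (hC : IsConeLift D C) {v₀ v₁ : RV n} (h₀ : v₀ ∈ C)
    (h₁ : v₁ ∈ vectorLift D)
    (hseg : ∀ a b : ℝ, 0 ≤ a * b → a • v₀ + b • v₁ ≠ 0 → a • v₀ + b • v₁ ∈ vectorLift D)
    {c₀ c₁ : ℂ} (hre : 0 ≤ (c₀ * conj c₁).re) (hne : c₀ • cplx v₀ + c₁ • cplx v₁ ≠ 0) :
    ∃ u w : RV n, u + w ∈ C ∧ u - w ∈ C ∧
      ∃ l : ℂ, l • (c₀ • cplx v₀ + c₁ • cplx v₁) = cvec u w := by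
  rcases (hC.mem_vectorLift v₁).1 h₁ with h₁ | h₁
  · exact hC.exists_cvec_of_combo h₀ h₁ hre hne
  obtain ⟨f, hf⟩ := hC.exists_pos_functional
  have hf₀ := hf _ h₀
  have hf₁ := hf _ h₁
  rw [map_neg] at hf₁
  have hfz : f ((-f v₁) • v₀ + f v₀ • v₁) = 0 := by
    simp only [map_add, map_smul, smul_eq_mul]; ring
  have hzero : (-f v₁) • v₀ + f v₀ • v₁ = 0 := by
    by_contra h
    rcases (hC.mem_vectorLift _).1 (hseg _ _ (mul_pos hf₁ hf₀).le h) with h' | h'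
    · exact (hf _ h').ne' hfz
    · have := hf _ h'
      rw [map_neg, hfz] at this
      simp at this
  have hv₁ : v₁ = (f v₁ / f v₀) • v₀ := by
    have : f v₀ • v₁ = f v₁ • v₀ := by
      rw [neg_smul, neg_add_eq_zero] at hzero
      exact hzero.symm
    rw [div_eq_inv_mul, mul_smul, ← this, smul_smul, inv_mul_cancel₀ hf₀.ne', one_smul]
  have heq : c₀ • cplx v₀ + c₁ • cplx v₁ =
      (c₀ + c₁ * ((f v₁ / f v₀ : ℝ) : ℂ)) • cplx v₀ + (0 : ℂ) • cplx v₀ := by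
    ext i
    have := congrFun hv₁ i
    simp only [Pi.smul_apply, smul_eq_mul] at this
    simp only [cplx, Pi.add_apply, Pi.smul_apply, smul_eq_mul]
    rw [this]
    push_cast
    ring
  rw [heq] at hne ⊢
  exact hC.exists_cvec_of_combo h₀ h₀ (by simp) hne

lemma IsConeLift.exists_cvec_of_mem_eTube (hC : IsConeLift D C) {z : CP n} (hz : z ∈ eTube D) :
    ∃ (u w : RV n) (h : cvec u w ≠ 0), u + w ∈ C ∧ u - w ∈ C ∧
      Projectivization.mk ℂ (cvec u w) h = z := by
  simp only [eTube, Set.mem_iUnion] at hz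
  obtain ⟨v₀, v₁, hv₀, hv₁, hseg, c₀, c₁, hc, hne, rfl⟩ := hz
  have hseg' : ∀ a b : ℝ, 0 ≤ a * b → a • v₀ + b • v₁ ≠ 0 →
      a • v₀ + b • v₁ ∈ vectorLift D := fun a b hab h =>
    (mk_mem_iff_mem_vectorLift h).1 (hseg ⟨a, b, hab, h, rfl⟩)
  have h₀ : v₀ ∈ vectorLift D := by simpa [hv₀] using hseg' 1 0 (by simp)
  have h₁ : v₁ ∈ vectorLift D := by simpa [hv₁] using hseg' 0 1 (by simp)
  obtain ⟨u, w, hp, hm, l, hl⟩ : ∃ u w : RV n, u + w ∈ C ∧ u - w ∈ C ∧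
      ∃ l : ℂ, l • (c₀ • cplx v₀ + c₁ • cplx v₁) = cvec u w := by
    rcases (hC.mem_vectorLift v₀).1 h₀ with h | h
    · exact hC.exists_cvec_of_seg h h₁ hseg' hc hne
    · have hneg : ∀ v : RV n, cplx (-v) = -cplx v := fun v => by ext i; simp [cplx]
      have heq : c₀ • cplx v₀ + c₁ • cplx v₁ = (-c₀) • cplx (-v₀) + (-c₁) • cplx (-v₁) := by
        rw [hneg, hneg, neg_smul_neg, neg_smul_neg]
      rw [heq] at hne ⊢
      refine hC.exists_cvec_of_seg h (neg_mem_vectorLift h₁) (fun a b hab hab0 => ?_)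
        (by simpa using hc) hne
      have hsum : a • -v₀ + b • -v₁ = (-a) • v₀ + (-b) • v₁ := by module
      rw [hsum] at hab0 ⊢
      exact hseg' _ _ (by simpa using hab) hab0
  refine ⟨u, w, cvec_ne_zero (hC.ne_zero_of_mem (hC.mem_of_add_mem_of_sub_mem hp hm)), hp, hm, ?_⟩
  rw [Projectivization.mk_eq_mk_iff']
  exact ⟨l, hl⟩

end EllipticTube

section FixedPoints

variable {n : ℕ} {D : Set (RP n)} {C : Set (RV n)}

lemma four_mul_le_sq_of_pos_recurrence {α : ℕ → ℝ} {p q : ℝ} (hq : 0 ≤ q) (hα : ∀ k, 0 < α k)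
    (hrec : ∀ k, α (k + 2) = p * α (k + 1) - q * α k) : 4 * q ≤ p ^ 2 := by
  by_contra! hlt
  have hδ : 0 < 2 * √q - p := by
    have : p < √(4 * q) := Real.lt_sqrt_of_sq_lt hlt
    rw [show (4 : ℝ) * q = 2 ^ 2 * q by ring, Real.sqrt_mul (by positivity),
      Real.sqrt_sq (by norm_num)] at this
    linarith
  have hstep : ∀ k, α (k + 2) / α (k + 1) ≤ α (k + 1) / α k - (2 * √q - p) := by
    intro k
    have h0 := hα k
    have h1 := hα (k + 1)
    have hsq := Real.sq_sqrt hq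
    rw [hrec, div_le_iff₀ h1, ← sub_nonneg]
    have : (α (k + 1) / α k - (2 * √q - p)) * α (k + 1) - (p * α (k + 1) - q * α k) =
        (α (k + 1) - √q * α k) ^ 2 / α k := by
      field_simp
      linear_combination -(α k) ^ 2 * hsq
    rw [this]
    positivity
  have hbound : ∀ k : ℕ, α (k + 1) / α k ≤ α 1 / α 0 - k * (2 * √q - p) := by
    intro k
    induction k with
    | zero => simp
    | succ k ih =>
      have := hstep k
      push_cast
      linarith
  obtain ⟨k, hk⟩ := exists_nat_gt (α 1 / α 0 / (2 * √q - p))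
  rw [div_lt_iff₀ hδ] at hk
  have := hbound k
  have := div_pos (hα (k + 1)) (hα k)
  linarith

lemma IsConeLift.im_eq_zero_of_rotation (hC : IsConeLift D C) {T : RV n →ₗ[ℝ] RV n}
    (hT : ∀ v ∈ C, T v ∈ C) {u w : RV n} (hu : u ∈ C) {r s : ℝ} (hTu : T u = r • u - s • w)
    (hTw : T w = s • u + r • w) : s = 0 := by
  obtain ⟨f, hf⟩ := hC.exists_pos_functional
  have hmem : ∀ k : ℕ, (T ^ k) u ∈ C := by
    intro k
    induction k with
    | zero => simpa using hu
    | succ k ih =>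
      rw [pow_succ', Module.End.mul_apply]
      exact hT _ ih
  have hTT : T (T u) = (2 * r) • T u - (r ^ 2 + s ^ 2) • u := by
    rw [hTu, map_sub, map_smul, map_smul, hTu, hTw]
    module
  have h := four_mul_le_sq_of_pos_recurrence (α := fun k => f ((T ^ k) u)) (p := 2 * r)
    (q := r ^ 2 + s ^ 2) (by positivity) (fun k => hf _ (hmem k)) fun k => by
      rw [pow_add T k 2, Module.End.mul_apply, pow_two T, Module.End.mul_apply, hTT,
        pow_succ T k, Module.End.mul_apply]
      simp only [map_sub, map_smul, smul_eq_mul]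
  have : s ^ 2 ≤ 0 := by linarith
  exact pow_eq_zero_iff two_ne_zero |>.1 (le_antisymm this (sq_nonneg s))

lemma exists_fixed_point_of_actC_fixed (hC : IsConeLift D C)
    {γ : Matrix.GeneralLinearGroup (Fin (n + 1)) ℝ} (hγ : actR γ '' D = D) {z : CP n}
    (hz : z ∈ eTube D) (hfix : actC γ z = z) : ∃ x ∈ D, actR γ x = x := by
  obtain ⟨u, w, h, hp, hm, rfl⟩ := hC.exists_cvec_of_mem_eTube hz
  have hu := hC.mem_of_add_mem_of_sub_mem hp hm
  have hu0 := hC.ne_zero_of_mem hu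
  rw [actC_mk, Projectivization.mk_eq_mk_iff'] at hfix
  obtain ⟨l, hl⟩ := hfix
  rw [cMat_mulVec_cvec, smul_cvec, cvec_inj] at hl
  obtain ⟨σ, hσ, hσC⟩ := hC.exists_smul_mapsTo
    (Matrix.toLin' (γ : Matrix (Fin (n + 1)) (Fin (n + 1)) ℝ)) fun v hv => by
      rw [Matrix.toLin'_apply]
      exact mulVec_mem_vectorLift hγ hv
  have him := hC.im_eq_zero_of_rotation
    (T := σ • Matrix.toLin' (γ : Matrix (Fin (n + 1)) (Fin (n + 1)) ℝ)) hσC hu (w := w)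
    (r := σ * l.re) (s := σ * l.im)
    (by rw [LinearMap.smul_apply, Matrix.toLin'_apply, ← hl.1]; module)
    (by rw [LinearMap.smul_apply, Matrix.toLin'_apply, ← hl.2]; module)
  have him' : l.im = 0 := (mul_eq_zero.1 him).resolve_left hσ
  refine ⟨Projectivization.mk ℝ u hu0,
    (mk_mem_iff_mem_vectorLift hu0).2 ((hC.mem_vectorLift u).2 (Or.inl hu)), ?_⟩
  rw [actR_mk, Projectivization.mk_eq_mk_iff']
  exact ⟨l.re, by rw [← hl.1, him', zero_smul, sub_zero]⟩

end FixedPoints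

section ProperDiscontinuity

variable {n : ℕ} {D : Set (RP n)} {C : Set (RV n)}

lemma rotation_comparable {a b r s m : ℝ} (hb : |b| ≤ a) (hb' : |s * a + r * b| ≤ r * a - s * b)
    (hm : 0 ≤ m) (hrs : m ^ 2 = r ^ 2 + s ^ 2) :
    m * a ≤ 2 * (r * a - s * b) ∧ r * a - s * b ≤ 2 * (m * a) := by
  have ha : 0 ≤ a := (abs_nonneg b).trans hb
  have ha' : 0 ≤ r * a - s * b := (abs_nonneg _).trans hb'
  have hsq : b ^ 2 ≤ a ^ 2 := sq_le_sq' (abs_le.1 hb).1 (abs_le.1 hb).2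
  have hsq' : (s * a + r * b) ^ 2 ≤ (r * a - s * b) ^ 2 :=
    sq_le_sq' (abs_le.1 hb').1 (abs_le.1 hb').2
  have hkey : (r * a - s * b) ^ 2 + (s * a + r * b) ^ 2 = m ^ 2 * (a ^ 2 + b ^ 2) := by
    rw [hrs]; ring
  constructor
  · refine le_of_sq_le_sq ?_ (by positivity)
    nlinarith [mul_nonneg (sq_nonneg m) (sq_nonneg b)]
  · refine le_of_sq_le_sq ?_ (by positivity)
    nlinarith [mul_le_mul_of_nonneg_left hsq (sq_nonneg m), mul_nonneg (sq_nonneg m) (sq_nonneg a)]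

lemma isOpen_image_mk {N : Set (CV n)} (hN : IsOpen N) :
    IsOpen {z : CP n | ∃ (v : CV n) (h : v ≠ 0), v ∈ N ∧ Projectivization.mk ℂ v h = z} := by
  set U := {z : CP n | ∃ (v : CV n) (h : v ≠ 0), v ∈ N ∧ Projectivization.mk ℂ v h = z} with hU
  have hpre : IsOpen (Projectivization.mk' ℂ ⁻¹' U) := by
    have heq : Projectivization.mk' ℂ ⁻¹' U =
        ⋃ a : ℂˣ, {v : {v : CV n // v ≠ 0} | (a : ℂ) • (v : CV n) ∈ N} := by
      ext ⟨v, hv⟩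
      simp only [hU, Set.mem_preimage, Projectivization.mk'_eq_mk, Set.mem_ofPred_eq,
        Set.mem_iUnion]
      constructor
      · rintro ⟨v', hv', hN', heq⟩
        obtain ⟨a, ha⟩ := (Projectivization.mk_eq_mk_iff ℂ _ _ hv' hv).1 heq
        exact ⟨a, by rwa [← Units.smul_def, ha]⟩
      · rintro ⟨a, ha⟩
        exact ⟨(a : ℂ) • v, smul_ne_zero a.ne_zero hv, ha,
          (Projectivization.mk_eq_mk_iff' ℂ _ _ _ _).2 ⟨a, rfl⟩⟩
    rw [heq]
    exact isOpen_iUnion fun a => hN.preimage (continuous_subtype_val.const_smul (a : ℂ))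
  exact hpre

lemma isCompact_image_mk {S : Set (RV n)} (hS : IsCompact S) (h0 : ∀ v ∈ S, v ≠ 0) :
    IsCompact {x : RP n | ∃ (v : RV n) (h : v ≠ 0), v ∈ S ∧ Projectivization.mk ℝ v h = x} := by
  have hcpt : IsCompact ((↑) ⁻¹' S : Set {v : RV n // v ≠ 0}) :=
    Topology.IsInducing.subtypeVal.isCompact_preimage' hS fun v hv => ⟨⟨v, h0 v hv⟩, rfl⟩
  convert! hcpt.image (continuous_projectivization_mk' (K := ℝ) (V := RV n)) using 1
  ext x
  constructor
  · rintro ⟨v, h, hv, rfl⟩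
    exact ⟨⟨v, h⟩, hv, rfl⟩
  · rintro ⟨⟨v, h⟩, hv, rfl⟩
    exact ⟨v, h, hv, rfl⟩

/-- Over a compact part of the elliptic tube, all real parts of representatives `u + i w` with
`u ± w` in the cone stay in a compact part of the base. -/
lemma IsConeLift.exists_compact_real_parts (hC : IsConeLift D C) {K : Set (CP n)}
    (hK : IsCompact K) (hKD : K ⊆ eTube D) :
    ∃ K' ⊆ D, IsCompact K' ∧ ∀ (u w : RV n) (h : cvec u w ≠ 0) (hu : u ≠ 0),
      u + w ∈ C → u - w ∈ C → Projectivization.mk ℂ (cvec u w) h ∈ K →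
        Projectivization.mk ℝ u hu ∈ K' := by
  refine hK.induction_on (p := fun s => ∃ K' ⊆ D, IsCompact K' ∧
    ∀ (u w : RV n) (h : cvec u w ≠ 0) (hu : u ≠ 0), u + w ∈ C → u - w ∈ C →
      Projectivization.mk ℂ (cvec u w) h ∈ s → Projectivization.mk ℝ u hu ∈ K')
    ⟨∅, Set.empty_subset _, isCompact_empty, fun _ _ _ _ _ _ h => h.elim⟩ ?_ ?_ ?_
  · rintro s t hst ⟨K', hK', hcpt, h⟩
    exact ⟨K', hK', hcpt, fun u w h0 hu hp hm hs => h u w h0 hu hp hm (hst hs)⟩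
  · rintro s t ⟨K₁, hK₁, hcpt₁, h₁⟩ ⟨K₂, hK₂, hcpt₂, h₂⟩
    refine ⟨K₁ ∪ K₂, Set.union_subset hK₁ hK₂, hcpt₁.union hcpt₂, ?_⟩
    rintro u w h0 hu hp hm (hs | ht)
    · exact Or.inl (h₁ u w h0 hu hp hm hs)
    · exact Or.inr (h₂ u w h0 hu hp hm ht)
  intro z hz
  obtain ⟨u₀, w₀, h₀, hp₀, hm₀, rfl⟩ := hC.exists_cvec_of_mem_eTube (hKD hz)
  have hu₀ := hC.mem_of_add_mem_of_sub_mem hp₀ hm₀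
  let re : CV n → RV n := fun v i => (v i).re
  let im : CV n → RV n := fun v i => (v i).im
  have hre : Continuous re := by fun_prop
  have him : Continuous im := by fun_prop
  let N : Set (CV n) := {v | re v + im v ∈ C} ∩ {v | re v - im v ∈ C} ∩
    {v | re v - (1 / 2 : ℝ) • u₀ ∈ C} ∩ {v | (2 : ℝ) • u₀ - re v ∈ C}
  have hN : IsOpen N :=
    (((hC.isOpen.preimage (hre.add him)).inter (hC.isOpen.preimage (hre.sub him))).inter
      (hC.isOpen.preimage (hre.sub continuous_const))).inter
      (hC.isOpen.preimage (continuous_const.sub hre))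
  have hN₀ : cvec u₀ w₀ ∈ N := by
    refine ⟨⟨⟨hp₀, hm₀⟩, ?_⟩, ?_⟩
    · have : u₀ - (1 / 2 : ℝ) • u₀ = (1 / 2 : ℝ) • u₀ := by module
      change u₀ - (1 / 2 : ℝ) • u₀ ∈ C
      rw [this]
      exact hC.smul_mem _ (by norm_num) _ hu₀
    · have : (2 : ℝ) • u₀ - u₀ = u₀ := by module
      change (2 : ℝ) • u₀ - u₀ ∈ C
      rwa [this]
  refine ⟨_, mem_nhdsWithin_of_mem_nhds ((isOpen_image_mk hN).mem_nhds ⟨_, h₀, hN₀, rfl⟩), ?_⟩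
  have hSC : ∀ u : RV n, (∀ f : RV n →L[ℝ] ℝ, (∀ v ∈ C, 0 ≤ f v) →
      1 / 4 * f u₀ ≤ f u ∧ f u ≤ 4 * f u₀) → u ∈ C := fun u hu =>
    hC.mem_of_forall_functional hu₀ (by norm_num) fun f hf => (hu f hf).1
  refine ⟨_, ?_, isCompact_image_mk (hC.isCompact_setOf_comparable hu₀)
    fun v hv => hC.ne_zero_of_mem (hSC v hv), ?_⟩
  · rintro x ⟨v, h, hv, rfl⟩
    exact (mk_mem_iff_mem_vectorLift h).2 ((hC.mem_vectorLift v).2 (Or.inl (hSC v hv)))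
  rintro u w h hu hp hm ⟨v, hv, ⟨⟨⟨hvp, hvm⟩, hvl⟩, hvu⟩, heq⟩
  obtain ⟨a, ha⟩ := (Projectivization.mk_eq_mk_iff ℂ _ _ h hv).1 heq.symm
  have hv' : v = cvec (re v) (im v) := rfl
  rw [Units.smul_def, hv', smul_cvec, cvec_inj] at ha
  obtain ⟨hau, haw⟩ := ha
  have hnorm : 0 < ‖(a : ℂ)‖ := norm_pos_iff.2 a.ne_zero
  refine ⟨‖(a : ℂ)‖⁻¹ • u, smul_ne_zero (inv_ne_zero hnorm.ne') hu, ?_,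
    (Projectivization.mk_eq_mk_iff' ℝ _ _ _ _).2 ⟨_, rfl⟩⟩
  intro f hf
  have habs : ∀ x y : RV n, x + y ∈ C → x - y ∈ C → |f y| ≤ f x := by
    intro x y hxp hxm
    have h1 := hf _ hxp
    have h2 := hf _ hxm
    rw [map_add] at h1
    rw [map_sub] at h2
    exact abs_le.2 ⟨by linarith, by linarith⟩
  have hfu : f u = (a : ℂ).re * f (re v) - (a : ℂ).im * f (im v) := by
    rw [← hau]; simp
  have hfw : f w = (a : ℂ).im * f (re v) + (a : ℂ).re * f (im v) := by
    rw [← haw]; simp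
  have hrot := habs u w hp hm
  rw [hfu, hfw] at hrot
  obtain ⟨hlo, hhi⟩ := rotation_comparable (habs _ _ hvp hvm) hrot hnorm.le (by
    rw [Complex.sq_norm, Complex.normSq_apply]; ring)
  rw [← hfu] at hlo hhi
  have h1 := hf _ hvl
  have h2 := hf _ hvu
  rw [map_sub, map_smul, smul_eq_mul] at h1 h2
  rw [map_smul, smul_eq_mul, inv_mul_eq_div, le_div_iff₀ hnorm, div_le_iff₀ hnorm]
  constructor <;> nlinarith

end ProperDiscontinuity

/-- If `Γ ⊆ GL(n+1,ℝ)` acts projectively on an open properly convex set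
`Ω ⊆ ℝℙⁿ` preserving it, freely (only scalar matrices have fixed points in `Ω`) and
properly discontinuously (the set of classes modulo scalars — equivalently, of induced
projective maps — of elements moving a compact `K ⊆ Ω` into itself is finite), then the
induced action on `ℂℙⁿ` preserves the elliptic tube `Ω^e` and is free and properly
discontinuous on it in the same sense. -/
theorem gamma_acts_freely_properly_discontinuously_on_eTube
    (n : ℕ) (Ω : Set (RP n)) (hΩo : IsOpen Ω) (hpc : properlyConvexR Ω)
    (Γ : Subgroup (Matrix.GeneralLinearGroup (Fin (n + 1)) ℝ))
    (hpres : ∀ γ ∈ Γ, actR γ '' Ω = Ω)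
    (hfree : ∀ γ ∈ Γ, (∃ x ∈ Ω, actR γ x = x) →
      ∃ r : ℝ, (γ : Matrix (Fin (n + 1)) (Fin (n + 1)) ℝ) =
        r • (1 : Matrix (Fin (n + 1)) (Fin (n + 1)) ℝ))
    (hpd : ∀ K : Set (RP n), K ⊆ Ω → IsCompact K →
      Set.Finite ((fun γ : Matrix.GeneralLinearGroup (Fin (n + 1)) ℝ =>
          (actR γ : RP n → RP n)) ''
        {γ | γ ∈ Γ ∧ (actR γ '' K ∩ K).Nonempty})) :
    (∀ γ ∈ Γ, actC γ '' eTube Ω = eTube Ω) ∧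
    (∀ γ ∈ Γ, (∃ z ∈ eTube Ω, actC γ z = z) →
      ∃ r : ℝ, (γ : Matrix (Fin (n + 1)) (Fin (n + 1)) ℝ) =
        r • (1 : Matrix (Fin (n + 1)) (Fin (n + 1)) ℝ)) ∧
    (∀ K : Set (CP n), K ⊆ eTube Ω → IsCompact K →
      Set.Finite ((fun γ : Matrix.GeneralLinearGroup (Fin (n + 1)) ℝ =>
          (actC γ : CP n → CP n)) ''
        {γ | γ ∈ Γ ∧ (actC γ '' K ∩ K).Nonempty})) := by
  obtain ⟨C, hC⟩ := exists_isConeLift hΩo hpc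
  refine ⟨fun γ hγ => ?_, fun γ hγ ⟨z, hz, hfix⟩ =>
    hfree γ hγ (exists_fixed_point_of_actC_fixed hC (hpres γ hγ) hz hfix), fun K hKΩ hK => ?_⟩
  · refine (mapsTo_actC_eTube (hpres γ hγ)).image_subset.antisymm fun z hz => ?_
    exact ⟨actC γ⁻¹ z, mapsTo_actC_eTube (hpres _ (Γ.inv_mem hγ)) hz, actC_actC_inv γ z⟩
  · obtain ⟨K', hK'Ω, hK', hreal⟩ := hC.exists_compact_real_parts hK hKΩ
    have hfactor : Function.FactorsThrough
        (fun γ : Matrix.GeneralLinearGroup (Fin (n + 1)) ℝ => (actC γ : CP n → CP n))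
        (fun γ => (actR γ : RP n → RP n)) := fun γ δ h => actC_eq_of_actR_eq h
    refine ((hpd K' hK'Ω hK').image (Function.extend
      (fun γ : Matrix.GeneralLinearGroup (Fin (n + 1)) ℝ => (actR γ : RP n → RP n))
      (fun γ => (actC γ : CP n → CP n)) fun _ => id)).subset ?_
    rintro _ ⟨γ, ⟨hγ, _, ⟨z, hzK, rfl⟩, hγz⟩, rfl⟩
    refine ⟨actR γ, ⟨γ, ⟨hγ, ?_⟩, rfl⟩, hfactor.extend_apply _ γ⟩
    obtain ⟨u, w, h, hp, hm, rfl⟩ := hC.exists_cvec_of_mem_eTube (hKΩ hzK)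
    have hu0 := hC.ne_zero_of_mem (hC.mem_of_add_mem_of_sub_mem hp hm)
    obtain ⟨σ, hσ, hσC⟩ := hC.exists_smul_mapsTo
      (Matrix.toLin' (γ : Matrix (Fin (n + 1)) (Fin (n + 1)) ℝ)) fun v hv => by
        rw [Matrix.toLin'_apply]
        exact mulVec_mem_vectorLift (hpres γ hγ) hv
    have hσu := smul_ne_zero hσ (mulVec_ne_zero γ hu0)
    refine ⟨_, ⟨_, hreal u w h hu0 hp hm hzK, rfl⟩, ?_⟩
    have hmk : actR γ (Projectivization.mk ℝ u hu0) = Projectivization.mk ℝ _ hσu := by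
      rw [actR_mk, Projectivization.mk_eq_mk_iff']
      exact ⟨σ⁻¹, by rw [smul_smul, inv_mul_cancel₀ hσ, one_smul]⟩
    rw [hmk]
    refine hreal _ (σ • (γ : Matrix (Fin (n + 1)) (Fin (n + 1)) ℝ).mulVec w) (cvec_ne_zero hσu)
      hσu ?_ ?_ ?_
    · simpa [Matrix.mulVec_add] using hσC _ hp
    · simpa [Matrix.mulVec_sub, smul_sub] using hσC _ hm
    · convert! hγz using 1
      rw [actC_mk, Projectivization.mk_eq_mk_iff']
      refine ⟨(σ : ℂ), ?_⟩
      rw [cMat_mulVec_cvec, smul_cvec, cvec_inj]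
      simp
end
end
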